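/- arXiv:2102.04994 — 2 statements merged into one kernel-verified Lean document; each statement's English description precedes it below -/
import Mathlib

section
/- Let H be the star-expansion of the four-vertex path P₄. Then there exists a real number τ > 0 such that every graph G that is both H-free and H̄-free satisfies max(α(G), ω(G)) ≥ |G|^τ; that is, {H, H̄} has the Erdős–Hajnal property. -/
open SimpleGraph

/-- The independence (stable set) number of a graph: the clique number of the complement. -/
noncomputable def alphaNum {V : Type*} (G : SimpleGraph V) : ℕ := Gᶜ.cliqueNum

/-- The clique number of a graph. -/
noncomputable def omegaNum {V : Type*} (G : SimpleGraph V) : ℕ := G.cliqueNum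

/-- κ(G) = α(G)·ω(G). -/
noncomputable def kappaNum {V : Type*} (G : SimpleGraph V) : ℕ := alphaNum G * omegaNum G

/-- The star-expansion of `H`: for each vertex `b` of `H`, add a new vertex `a_b` adjacent
to `b` only, and add one further vertex `v` adjacent to all of the `a_b` and nothing else. -/
def starExpansion {W : Type*} (H : SimpleGraph W) : SimpleGraph (W ⊕ W ⊕ Unit) :=
  SimpleGraph.fromRel (fun x y =>
    match x, y with
    | Sum.inl b, Sum.inl b' => H.Adj b b'
    | Sum.inl b, Sum.inr (Sum.inl a) => b = a
    | Sum.inr (Sum.inl _), Sum.inr (Sum.inr _) => True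
    | _, _ => False)

/-!
Write `κ = α * ω`. For `τ > 0`, a set of vertices minimising `κ / |·| ^ τ` among its subsets is
`τ`-critical, and it suffices to bound the size of critical sets. By Rödl's theorem, a large
critical set contains a linear-sized set on which `G` or its complement is sparse; as the hypotheses
are invariant under complementation, we may assume that it is `G`. For `τ` much smaller than
`σ = 1 / 28`, a `σ`-critical subset `Y` of this set keeps half of its vertices.

Let `v` be a vertex of maximum degree in `Y` and `S` a maximum stable set of neighbours of `v`.
By criticality, only few vertices of `Y` lie outside the neighbourhood of `S`. Hence there are large
combs: disjoint sets of nonneighbours of `v`, each the private neighbours of one vertex of some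
`T ⊆ S`. Colour their union by `T`. A rainbow `P₄` would extend, through `T` and `v`, to a
star-expansion of `P₄`, so there is none. But a set without rainbow `P₄` whose colour classes are
small contains a complete or anticomplete pair of linear-sized sets; iterating this makes `κ` of
the comb exceed `κ` of `Y`.
-/

open scoped Finset

universe u

section Kappa

variable {V : Type*} {G : SimpleGraph V} {A B C : Finset V}

lemma card_le_omegaNum_induce (hAB : A ⊆ B) (hA : G.IsClique (A : Set V)) :
    #A ≤ omegaNum (G.induce B) := by
  classical
  have hclique : (G.induce (B : Set V)).IsNClique #A (A.subtype (· ∈ (B : Set V))) := by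
    rw [isNClique_induce_iff]
    convert isNClique_iff G |>.2 ⟨hA, rfl⟩
    exact Finset.subtype_map_of_mem fun x hx ↦ hAB hx
  exact hclique.card_eq ▸ hclique.isClique.card_le_cliqueNum

lemma exists_isClique_card_eq_omegaNum_induce (G : SimpleGraph V) (A : Finset V) :
    ∃ S ⊆ A, G.IsClique (S : Set V) ∧ #S = omegaNum (G.induce A) := by
  obtain ⟨S, hS⟩ := (G.induce (A : Set V)).exists_isNClique_cliqueNum
  rw [isNClique_induce_iff] at hS
  exact ⟨_, fun x hx ↦ Finset.property_of_mem_map_subtype S hx, hS.isClique, hS.card_eq⟩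

lemma alphaNum_induce (G : SimpleGraph V) (A : Finset V) :
    alphaNum (G.induce A) = omegaNum (Gᶜ.induce A) := by
  have hcompl : (G.induce (A : Set V))ᶜ = Gᶜ.induce A := by
    ext x y
    simp only [compl_adj, comap_adj, Function.Embedding.subtype_apply, ne_eq, Subtype.ext_iff]
  rw [alphaNum, omegaNum, hcompl]

lemma kappaNum_induce_compl (G : SimpleGraph V) (A : Finset V) :
    kappaNum (Gᶜ.induce A) = kappaNum (G.induce A) := by
  rw [kappaNum, kappaNum, alphaNum_induce, alphaNum_induce, compl_compl, mul_comm]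

lemma omegaNum_induce_mono (hAB : A ⊆ B) : omegaNum (G.induce A) ≤ omegaNum (G.induce B) := by
  obtain ⟨S, hSA, hS, hcard⟩ := exists_isClique_card_eq_omegaNum_induce G A
  exact hcard ▸ card_le_omegaNum_induce (hSA.trans hAB) hS

lemma alphaNum_induce_mono (hAB : A ⊆ B) : alphaNum (G.induce A) ≤ alphaNum (G.induce B) := by
  simpa only [alphaNum_induce] using omegaNum_induce_mono hAB

lemma kappaNum_induce_mono (hAB : A ⊆ B) : kappaNum (G.induce A) ≤ kappaNum (G.induce B) :=
  Nat.mul_le_mul (alphaNum_induce_mono hAB) (omegaNum_induce_mono hAB)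

lemma omegaNum_induce_pos (hA : A.Nonempty) : 0 < omegaNum (G.induce A) := by
  obtain ⟨a, ha⟩ := hA
  exact card_le_omegaNum_induce (G := G) (Finset.singleton_subset_iff.2 ha) (by simp)

lemma alphaNum_induce_pos (hA : A.Nonempty) : 0 < alphaNum (G.induce A) :=
  (omegaNum_induce_pos hA).trans_eq (alphaNum_induce G A).symm

lemma kappaNum_induce_pos (hA : A.Nonempty) : 0 < kappaNum (G.induce A) :=
  Nat.mul_pos (alphaNum_induce_pos hA) (omegaNum_induce_pos hA)

lemma omegaNum_induce_add_le (hA : A ⊆ C) (hB : B ⊆ C) (hAB : ∀ a ∈ A, ∀ b ∈ B, G.Adj a b) :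
    omegaNum (G.induce A) + omegaNum (G.induce B) ≤ omegaNum (G.induce C) := by
  classical
  obtain ⟨S, hSA, hS, hScard⟩ := exists_isClique_card_eq_omegaNum_induce G A
  obtain ⟨T, hTB, hT, hTcard⟩ := exists_isClique_card_eq_omegaNum_induce G B
  have hdisj : Disjoint S T :=
    Finset.disjoint_left.2 fun x hx hx' ↦ G.irrefl (hAB x (hSA hx) x (hTB hx'))
  rw [← hScard, ← hTcard, ← Finset.card_union_of_disjoint hdisj]
  refine card_le_omegaNum_induce (Finset.union_subset (hSA.trans hA) (hTB.trans hB)) ?_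
  have := G.symm
  rw [Finset.coe_union, IsClique, Set.pairwise_union_of_symm]
  exact ⟨hS, hT, fun a ha b hb _ ↦ hAB a (hSA ha) b (hTB hb)⟩

end Kappa

section PurePairs

variable {V ι : Type*} {G : SimpleGraph V} {c : V → ι} {U W Z C : Finset V} {m : ℕ}

/-- Two disjoint sets of vertices form a pure pair for the colouring `c` if all the pairs of
vertices with distinct colours that they span are adjacent, or all are nonadjacent.
For `c = id` these are the complete and the anticomplete pairs. -/
def IsPurePair (G : SimpleGraph V) (c : V → ι) (U W : Finset V) : Prop :=
  Disjoint U W ∧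
    ((∀ u ∈ U, ∀ w ∈ W, c u ≠ c w → G.Adj u w) ∨ ∀ u ∈ U, ∀ w ∈ W, c u ≠ c w → ¬ G.Adj u w)

lemma IsPurePair.of_compl (h : IsPurePair Gᶜ c U W) : IsPurePair G c U W := by
  have hcompl : ∀ {u w}, c u ≠ c w → (Gᶜ.Adj u w ↔ ¬ G.Adj u w) := fun hne ↦ by
    simp [compl_adj, ne_of_apply_ne c hne]
  refine ⟨h.1, h.2.symm.imp (fun hadj u hu w hw hne ↦ ?_) fun hadj u hu w hw hne ↦ ?_⟩
  · exact not_not.1 fun hn ↦ hadj u hu w hw hne ((hcompl hne).2 hn)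
  · exact (hcompl hne).1 (hadj u hu w hw hne)

lemma IsPurePair.kappaNum_add_le (h : IsPurePair G id U W) (hU : U ⊆ C) (hW : W ⊆ C) :
    kappaNum (G.induce U) + kappaNum (G.induce W) ≤ kappaNum (G.induce C) := by
  suffices hcomplete : ∀ G' : SimpleGraph V, (∀ u ∈ U, ∀ w ∈ W, G'.Adj u w) →
      kappaNum (G'.induce U) + kappaNum (G'.induce W) ≤ kappaNum (G'.induce C) by
    have hne : ∀ u ∈ U, ∀ w ∈ W, u ≠ w := fun u hu w hw ↦ Finset.disjoint_iff_ne.1 h.1 u hu w hw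
    rcases h.2 with hadj | hadj
    · exact hcomplete G fun u hu w hw ↦ hadj u hu w hw (hne u hu w hw)
    · simpa only [kappaNum_induce_compl] using hcomplete Gᶜ fun u hu w hw ↦
        (G.compl_adj u w).2 ⟨hne u hu w hw, hadj u hu w hw (hne u hu w hw)⟩
  intro G' hadj
  calc kappaNum (G'.induce U) + kappaNum (G'.induce W)
      ≤ alphaNum (G'.induce C) * omegaNum (G'.induce U)
        + alphaNum (G'.induce C) * omegaNum (G'.induce W) :=
        add_le_add (Nat.mul_le_mul_right _ (alphaNum_induce_mono hU))
          (Nat.mul_le_mul_right _ (alphaNum_induce_mono hW))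
    _ = alphaNum (G'.induce C) * (omegaNum (G'.induce U) + omegaNum (G'.induce W)) :=
        (mul_add _ _ _).symm
    _ ≤ kappaNum (G'.induce C) := Nat.mul_le_mul_left _ (omegaNum_induce_add_le hU hW hadj)

lemma two_le_kappaNum_induce (hC : 2 ≤ #C) : 2 ≤ kappaNum (G.induce C) := by
  obtain ⟨a, ha, b, hb, hab⟩ := Finset.one_lt_card.1 hC
  have hpure : IsPurePair G id {a} {b} :=
    ⟨by simpa using hab, by simpa [hab] using em (G.Adj a b)⟩
  calc 1 + 1 ≤ kappaNum (G.induce ({a} : Finset V)) + kappaNum (G.induce ({b} : Finset V)) :=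
        add_le_add (kappaNum_induce_pos (Finset.singleton_nonempty a))
          (kappaNum_induce_pos (Finset.singleton_nonempty b))
    _ ≤ kappaNum (G.induce C) :=
        hpure.kappaNum_add_le (Finset.singleton_subset_iff.2 ha) (Finset.singleton_subset_iff.2 hb)

/-- `Z` contains a pure pair both of whose sides have at least `m` vertices. -/
def HasPurePair (G : SimpleGraph V) (c : V → ι) (Z : Finset V) (m : ℕ) : Prop :=
  ∃ U ⊆ Z, ∃ W ⊆ Z, m ≤ #U ∧ m ≤ #W ∧ IsPurePair G c U W

lemma HasPurePair.of_compl (h : HasPurePair Gᶜ c Z m) : HasPurePair G c Z m :=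
  let ⟨U, hU, W, hW, hmU, hmW, hpure⟩ := h
  ⟨U, hU, W, hW, hmU, hmW, hpure.of_compl⟩

end PurePairs

section Neighbours

variable {V : Type*} {G : SimpleGraph V} {B B' : Finset V} {x y : V}

open scoped Classical in
/-- The set of neighbours of `x` in the finite set `B`, for vertex types that need not be finite. -/
noncomputable def nbrsIn (G : SimpleGraph V) (B : Finset V) (x : V) : Finset V :=
  {b ∈ B | G.Adj x b}

@[simp]
lemma mem_nbrsIn : y ∈ nbrsIn G B x ↔ y ∈ B ∧ G.Adj x y := by
  simp [nbrsIn]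

lemma nbrsIn_subset (G : SimpleGraph V) (B : Finset V) (x : V) : nbrsIn G B x ⊆ B :=
  fun _ hy ↦ (mem_nbrsIn.1 hy).1

lemma nbrsIn_mono (h : B ⊆ B') (x : V) : nbrsIn G B x ⊆ nbrsIn G B' x :=
  fun _ hy ↦ mem_nbrsIn.2 ((mem_nbrsIn.1 hy).imp_left (@h _))

lemma card_nbrsIn_add_card_nbrsIn_compl (hx : x ∉ B) :
    #(nbrsIn G B x) + #(nbrsIn Gᶜ B x) = #B := by
  classical
  have hcompl : nbrsIn Gᶜ B x = {b ∈ B | ¬ G.Adj x b} := by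
    ext b
    simp only [mem_nbrsIn, compl_adj, Finset.mem_filter, and_congr_right_iff, and_iff_right_iff_imp]
    exact fun hb _ ↦ (ne_of_mem_of_not_mem hb hx).symm
  rw [hcompl, nbrsIn, Finset.card_filter_add_card_filter_not]

/-- Every vertex of `A` has at most `ε * #B` neighbours in `B`. The sets `A` and `B` need not be
disjoint; `SparseTo G ε A A` bounds the maximum degree of the subgraph induced on `A`. -/
def SparseTo (G : SimpleGraph V) (ε : ℝ) (A B : Finset V) : Prop :=
  ∀ a ∈ A, (#(nbrsIn G B a) : ℝ) ≤ ε * #B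

end Neighbours

section Rainbow

variable {V ι W : Type*} {G : SimpleGraph V} {H : SimpleGraph W} {c : V → ι}
  {M P Q R T Z Z' : Finset V} {m : ℕ}

/-- No induced copy of `H` in `G` with vertices in `Z` has all its vertices of distinct colours. -/
def RainbowFree (H : SimpleGraph W) (G : SimpleGraph V) (c : V → ι) (Z : Finset V) : Prop :=
  ∀ φ : H ↪g G, (∀ i, φ i ∈ Z) → ¬ Function.Injective (c ∘ φ)

lemma RainbowFree.mono (h : RainbowFree H G c Z) (hZ : Z' ⊆ Z) : RainbowFree H G c Z' :=
  fun φ hφ ↦ h φ fun i ↦ hZ (hφ i)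

lemma RainbowFree.compl (h : RainbowFree H G c Z) : RainbowFree Hᶜ Gᶜ c Z :=
  fun φ ↦ h (Embedding.complEquiv.symm φ)

lemma RainbowFree.of_iso {W' : Type*} {H' : SimpleGraph W'} (h : RainbowFree H G c Z)
    (e : H ≃g H') : RainbowFree H' G c Z :=
  fun φ hφ hc ↦ h (φ.comp e.toEmbedding) (fun i ↦ hφ (e i)) (hc.comp e.injective)

lemma nonempty_pathGraph_four_iso_compl : Nonempty (pathGraph 4 ≃g (pathGraph 4)ᶜ) := by
  refine ⟨⟨⟨![1, 3, 0, 2], ![2, 0, 3, 1], by decide, by decide⟩, ?_⟩⟩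
  simp only [compl_adj, pathGraph_adj]
  decide

lemma RainbowFree.pathGraph_four_compl (h : RainbowFree (pathGraph 4) G c Z) :
    RainbowFree (pathGraph 4) Gᶜ c Z :=
  nonempty_pathGraph_four_iso_compl.elim fun e ↦ h.compl.of_iso e.symm

lemma RainbowFree.false_of_path (h : RainbowFree (pathGraph 4) G c Z) {x y z w : V}
    (hx : x ∈ Z) (hy : y ∈ Z) (hz : z ∈ Z) (hw : w ∈ Z)
    (hxy : G.Adj x y) (hyz : G.Adj y z) (hzw : G.Adj z w)
    (hxz : ¬ G.Adj x z) (hxw : ¬ G.Adj x w) (hyw : ¬ G.Adj y w)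
    (hc : [c x, c y, c z, c w].Nodup) : False := by
  have hinj : Function.Injective (c ∘ ![x, y, z, w]) := List.nodup_ofFn.1 hc
  refine h ⟨⟨![x, y, z, w], hinj.of_comp⟩, ?_⟩ ?_ hinj
  · intro i j
    fin_cases i <;> fin_cases j <;>
      simp [pathGraph_adj, hxy, hyz, hzw, hxz, hxw, hyw, hxy.symm, hyz.symm, hzw.symm,
        mt Adj.symm hxz, mt Adj.symm hxw, mt Adj.symm hyw]
  · simp [Fin.forall_fin_succ, hx, hy, hz, hw]

/-- No vertex of `P` has the same colour as a vertex of `Q`. -/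
def ColourDisjoint (c : V → ι) (P Q : Finset V) : Prop :=
  ∀ x ∈ P, ∀ y ∈ Q, c x ≠ c y

lemma ColourDisjoint.symm (h : ColourDisjoint c P Q) : ColourDisjoint c Q P :=
  fun x hx y hy ↦ (h y hy x hx).symm

lemma ColourDisjoint.mono {P' Q' : Finset V} (h : ColourDisjoint c P Q) (hP : P' ⊆ P)
    (hQ : Q' ⊆ Q) : ColourDisjoint c P' Q' :=
  fun x hx y hy ↦ h x (hP hx) y (hQ hy)

lemma ColourDisjoint.disjoint (h : ColourDisjoint c P Q) : Disjoint P Q :=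
  Finset.disjoint_left.2 fun x hP hQ ↦ h x hP x hQ rfl

lemma colourDisjoint_filter_mem_filter_notMem [DecidableEq ι] (c : V → ι) (P Q : Finset V)
    (I : Finset ι) : ColourDisjoint c {z ∈ P | c z ∈ I} {z ∈ Q | c z ∉ I} :=
  fun _ hx _ hy h ↦ (Finset.mem_filter.1 hy).2 (h ▸ (Finset.mem_filter.1 hx).2)

lemma exists_not_adj_or_exists_connected [DecidableEq V] (K : SimpleGraph V) (hM : 3 * m ≤ #M) :
    (∃ U ⊆ M, ∃ W ⊆ M, Disjoint U W ∧ m ≤ #U ∧ m ≤ #W ∧ ∀ u ∈ U, ∀ w ∈ W, ¬ K.Adj u w) ∨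
      ∃ C ⊆ M, m ≤ #C ∧ ∀ D ⊆ C, D.Nonempty → D ≠ C → ∃ x ∈ D, ∃ y ∈ C \ D, K.Adj x y := by
  obtain ⟨C, ⟨hCM, hmC, hclosed⟩, hmin⟩ := exists_minimal_of_wellFoundedLT
    (fun C ↦ C ⊆ M ∧ m ≤ #C ∧ ∀ x ∈ C, ∀ y ∈ M \ C, ¬ K.Adj x y) ⟨M, by simp, by omega, by simp⟩
  refine or_iff_not_imp_right.2 fun hC ↦ ?_
  push Not at hC
  obtain ⟨D, hDC, hD, hDne, hDclosed⟩ := hC C hCM hmC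
  have hsmall : #D < m := by
    by_contra! hmD
    refine hDne (hDC.antisymm (hmin ⟨hDC.trans hCM, hmD, fun x hx y hy ↦ ?_⟩ hDC))
    by_cases hyC : y ∈ C
    · exact hDclosed x hx y (by grind)
    · exact hclosed x (hDC hx) y (by grind)
  have hsmall' : #(C \ D) < m := by
    by_contra! hmCD
    have hCD := hmin ⟨Finset.sdiff_subset.trans hCM, hmCD, fun x hx y hy ↦ ?_⟩ Finset.sdiff_subset
    · obtain ⟨d, hd⟩ := hD
      exact (Finset.mem_sdiff.1 (hCD (hDC hd))).2 hd
    by_cases hyC : y ∈ C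
    · exact fun h ↦ hDclosed y (by grind) x hx h.symm
    · exact hclosed x (by grind) y (by grind)
  have hcardC := Finset.card_sdiff_add_card_eq_card hDC
  have hcardM := Finset.card_sdiff_add_card_eq_card hCM
  exact ⟨C, hCM, M \ C, Finset.sdiff_subset, Finset.disjoint_sdiff, hmC, by omega, hclosed⟩

/-- The pairs of adjacent vertices with distinct colours. -/
def bichromaticGraph (G : SimpleGraph V) (c : V → ι) : SimpleGraph V where
  Adj x y := G.Adj x y ∧ c x ≠ c y
  symm := ⟨fun _ _ h ↦ ⟨h.1.symm, h.2.symm⟩⟩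

lemma RainbowFree.hasPurePair_of_dominated [DecidableEq V] (hZ : RainbowFree (pathGraph 4) G c Z)
    (hT : T ⊆ Z) (hQ : Q ⊆ Z) (hR : R ⊆ Z) (hTQ : ColourDisjoint c T Q)
    (hTR : ColourDisjoint c T R) (hQR : ColourDisjoint c Q R)
    (hN : 2 * m ≤ #(T.biUnion (nbrsIn G Q))) (hM : 3 * m ≤ #(R \ T.biUnion (nbrsIn G R))) :
    HasPurePair G c Z m := by
  set N := T.biUnion (nbrsIn G Q)
  set M := R \ T.biUnion (nbrsIn G R)
  have hNQ : N ⊆ Q := Finset.biUnion_subset.2 fun t _ ↦ nbrsIn_subset G Q t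
  have hMR : M ⊆ R := Finset.sdiff_subset
  obtain ⟨U, hU, W, hW, hdisj, hmU, hmW, hadj⟩ | ⟨C, hCM, hmC, hconn⟩ :=
    exists_not_adj_or_exists_connected (bichromaticGraph G c) hM
  · exact ⟨U, hU.trans (hMR.trans hR), W, hW.trans (hMR.trans hR), hmU, hmW, hdisj,
      .inr fun u hu w hw hne h ↦ hadj u hu w hw ⟨h, hne⟩⟩
  have hCR : C ⊆ R := hCM.trans hMR
  -- A vertex of `N` that is mixed on `C` is mixed on an edge of the connected set `C`.
  have hunmixed : ∀ q ∈ N, nbrsIn G C q = ∅ ∨ nbrsIn G C q = C := by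
    intro q hq
    by_contra! hmixed
    obtain ⟨x, hx, y, hy, hxy, hne⟩ := hconn _ (nbrsIn_subset G C q) hmixed.1 hmixed.2
    obtain ⟨t, ht, hqt⟩ := Finset.mem_biUnion.1 hq
    simp only [mem_nbrsIn, Finset.mem_sdiff, not_and] at hx hy hqt
    have hnadj : ∀ z ∈ C, ¬ G.Adj t z := fun z hz h ↦ (Finset.mem_sdiff.1 (hCM hz)).2
      (Finset.mem_biUnion.2 ⟨t, ht, mem_nbrsIn.2 ⟨hCR hz, h⟩⟩)
    exact hZ.false_of_path (hT ht) (hQ hqt.1) (hR (hCR hx.1)) (hR (hCR hy.1)) hqt.2 hx.2 hxy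
      (hnadj x hx.1) (hnadj y hy.1) (hy.2 hy.1) (by
        simp [hTQ t ht q hqt.1, hTR t ht x (hCR hx.1), hTR t ht y (hCR hy.1),
          hQR q hqt.1 x (hCR hx.1), hQR q hqt.1 y (hCR hy.1), hne])
  have hpure : ∀ N' ⊆ N, m ≤ #N' →
      ((∀ u ∈ N', ∀ w ∈ C, G.Adj u w) ∨ ∀ u ∈ N', ∀ w ∈ C, ¬ G.Adj u w) → HasPurePair G c Z m :=
    fun N' hN' hmN' hadj ↦ ⟨N', hN'.trans (hNQ.trans hQ), C, hCR.trans hR, hmN', hmC,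
      (hQR.mono (hN'.trans hNQ) hCR).disjoint,
      hadj.imp (fun h u hu w hw _ ↦ h u hu w hw) fun h u hu w hw _ ↦ h u hu w hw⟩
  have hsplit := Finset.card_filter_add_card_filter_not (s := N) (nbrsIn G C · = C)
  obtain hcomplete | hanti : m ≤ #{q ∈ N | nbrsIn G C q = C} ∨ m ≤ #{q ∈ N | ¬ nbrsIn G C q = C} :=
    by omega
  · refine hpure _ (Finset.filter_subset _ _) hcomplete (.inl fun u hu w hw ↦ ?_)
    rw [← (Finset.mem_filter.1 hu).2] at hw
    exact (mem_nbrsIn.1 hw).2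
  · refine hpure _ (Finset.filter_subset _ _) hanti (.inr fun u hu w hw h ↦ ?_)
    obtain ⟨huN, hu⟩ := Finset.mem_filter.1 hu
    exact Finset.notMem_empty w ((hunmixed u huN).resolve_right hu ▸ mem_nbrsIn.2 ⟨hw, h⟩)

lemma RainbowFree.hasPurePair_of_sparse (hZ : RainbowFree (pathGraph 4) G c Z)
    (hP : P ⊆ Z) (hQ : Q ⊆ Z) (hR : R ⊆ Z) (hPQ : ColourDisjoint c P Q)
    (hPR : ColourDisjoint c P R) (hQR : ColourDisjoint c Q R) (hmP : m ≤ #P) (hmQ : 8 * m ≤ #Q)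
    (hmR : 8 * m ≤ #R) (hdegQ : ∀ x ∈ P, 4 * #(nbrsIn G Q x) ≤ #Q)
    (hdegR : ∀ x ∈ P, 4 * #(nbrsIn G R x) ≤ #R) : HasPurePair G c Z m := by
  classical
  by_contra hno
  have hdom : ∀ T ⊆ P, ∀ Q' ⊆ Z, ∀ R' ⊆ Z, ColourDisjoint c P Q' → ColourDisjoint c P R' →
      ColourDisjoint c Q' R' → 8 * m ≤ #Q' → 8 * m ≤ #R' →
      2 * #(T.biUnion (nbrsIn G R')) ≤ #R' → 4 * #(T.biUnion (nbrsIn G Q')) ≤ #Q' := by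
    intro T hT Q' hQ' R' hR' hPQ' hPR' hQR' hmQ' hmR' hR2
    by_contra! hQ4
    have hcard := Finset.le_card_sdiff (T.biUnion (nbrsIn G R')) R'
    exact hno (hZ.hasPurePair_of_dominated (hT.trans hP) hQ' hR' (hPQ'.mono hT subset_rfl)
      (hPR'.mono hT subset_rfl) hQR' (by omega) (by omega))
  -- One more vertex in `T` takes the dominated part of `Q` or `R` from at most a quarter to at
  -- most a half, and then `hdom` brings it back to at most a quarter.
  have hsmall : ∀ T ⊆ P, 4 * #(T.biUnion (nbrsIn G Q)) ≤ #Q ∧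
      4 * #(T.biUnion (nbrsIn G R)) ≤ #R := by
    intro T hT
    induction T using Finset.induction_on with
    | empty => simp
    | insert x T _ ih =>
      obtain ⟨hxP, hTP⟩ := Finset.insert_subset_iff.1 hT
      have hinsert : ∀ B, #((insert x T).biUnion (nbrsIn G B)) ≤
          #(nbrsIn G B x) + #(T.biUnion (nbrsIn G B)) := fun B ↦ by
        rw [Finset.biUnion_insert]
        exact Finset.card_union_le _ _
      obtain ⟨ihQ, ihR⟩ := ih hTP
      have hQ2 : 2 * #((insert x T).biUnion (nbrsIn G Q)) ≤ #Q := by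
        linarith [hinsert Q, hdegQ x hxP]
      have hR2 : 2 * #((insert x T).biUnion (nbrsIn G R)) ≤ #R := by
        linarith [hinsert R, hdegR x hxP]
      exact ⟨hdom _ hT Q hQ R hR hPQ hPR hQR hmQ hmR hR2,
        hdom _ hT R hR Q hQ hPR hPQ hQR.symm hmR hmQ hQ2⟩
  have hsub : Q \ P.biUnion (nbrsIn G Q) ⊆ Q := Finset.sdiff_subset
  have hcard := Finset.le_card_sdiff (P.biUnion (nbrsIn G Q)) Q
  have hPsmall := (hsmall P subset_rfl).1
  refine hno ⟨P, hP, _, hsub.trans hQ, hmP, by omega, (hPQ.mono subset_rfl hsub).disjoint,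
    .inr fun u hu w hw _ h ↦ ?_⟩
  obtain ⟨hwQ, hw⟩ := Finset.mem_sdiff.1 hw
  exact hw (Finset.mem_biUnion.2 ⟨u, hu, mem_nbrsIn.2 ⟨hwQ, h⟩⟩)

lemma RainbowFree.card_lt_card_nbrsIn_add (hZ : RainbowFree (pathGraph 4) G c Z)
    (hno : ¬ HasPurePair G c Z m) {x : V} (hx : x ∈ P) (hP : P ⊆ Z) (hQ : Q ⊆ Z) (hR : R ⊆ Z)
    (hPQ : ColourDisjoint c P Q) (hPR : ColourDisjoint c P R) (hQR : ColourDisjoint c Q R)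
    (hxQ : 2 * m ≤ #(nbrsIn G Q x)) : #R < #(nbrsIn G R x) + 3 * m := by
  classical
  by_contra! hxR
  have hxP : {x} ⊆ P := Finset.singleton_subset_iff.2 hx
  have hcard := Finset.card_sdiff_add_card_eq_card (nbrsIn_subset G R x)
  refine hno (hZ.hasPurePair_of_dominated (hxP.trans hP) hQ hR (hPQ.mono hxP subset_rfl)
    (hPR.mono hxP subset_rfl) hQR ?_ ?_) <;> rw [Finset.singleton_biUnion] <;> omega

lemma RainbowFree.hasPurePair_of_colourDisjoint (hZ : RainbowFree (pathGraph 4) G c Z)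
    (hP : P ⊆ Z) (hQ : Q ⊆ Z) (hR : R ⊆ Z)
    (hPQ : ColourDisjoint c P Q) (hPR : ColourDisjoint c P R) (hQR : ColourDisjoint c Q R)
    (hmP : 2 * m ≤ #P) (hmQ : 12 * m ≤ #Q) (hmR : 12 * m ≤ #R) : HasPurePair G c Z m := by
  by_contra hno
  have hcompl : ∀ Q', ColourDisjoint c P Q' → ∀ x ∈ P,
      #(nbrsIn G Q' x) + #(nbrsIn Gᶜ Q' x) = #Q' := fun Q' h x hx ↦
    card_nbrsIn_add_card_nbrsIn_compl fun hxQ ↦ h x hx x hxQ rfl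
  have hlow : ∀ x ∈ P, #(nbrsIn G Q x) < 2 * m → #(nbrsIn G R x) < 2 * m := by
    intro x hx hxQ
    by_contra! hxR
    have := hZ.card_lt_card_nbrsIn_add hno hx hP hR hQ hPR hPQ hQR.symm hxR
    omega
  have hhigh : ∀ x ∈ P, 2 * m ≤ #(nbrsIn G Q x) →
      #(nbrsIn Gᶜ Q x) < 3 * m ∧ #(nbrsIn Gᶜ R x) < 3 * m := by
    intro x hx hxQ
    have hxR := hZ.card_lt_card_nbrsIn_add hno hx hP hQ hR hPQ hPR hQR hxQ
    have hxQ' := hZ.card_lt_card_nbrsIn_add hno hx hP hR hQ hPR hPQ hQR.symm (by omega)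
    have hcQ := hcompl Q hPQ x hx
    have hcR := hcompl R hPR x hx
    omega
  have hsplit := Finset.card_filter_add_card_filter_not (s := P) (fun x ↦ #(nbrsIn G Q x) < 2 * m)
  obtain hm | hm : m ≤ #{x ∈ P | #(nbrsIn G Q x) < 2 * m} ∨
      m ≤ #{x ∈ P | ¬ #(nbrsIn G Q x) < 2 * m} := by omega
  · have hsub := Finset.filter_subset (fun x ↦ #(nbrsIn G Q x) < 2 * m) P
    refine hno (hZ.hasPurePair_of_sparse (hsub.trans hP) hQ hR (hPQ.mono hsub subset_rfl)
      (hPR.mono hsub subset_rfl) hQR hm (by omega) (by omega) (fun x hx ↦ ?_) fun x hx ↦ ?_) <;>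
    obtain ⟨hxP, hx⟩ := Finset.mem_filter.1 hx
    · omega
    · have := hlow x hxP hx
      omega
  · have hsub := Finset.filter_subset (fun x ↦ ¬ #(nbrsIn G Q x) < 2 * m) P
    refine hno (hZ.pathGraph_four_compl.hasPurePair_of_sparse (hsub.trans hP) hQ hR
      (hPQ.mono hsub subset_rfl) (hPR.mono hsub subset_rfl) hQR hm (by omega) (by omega)
      (fun x hx ↦ ?_) fun x hx ↦ ?_).of_compl <;>
    · obtain ⟨hxP, hx⟩ := Finset.mem_filter.1 hx
      have := hhigh x hxP (not_lt.1 hx)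
      omega

lemma exists_card_filter_colour_mem [DecidableEq ι] {s : ℕ} (hs : ∀ i, #{z ∈ Z | c z = i} ≤ s)
    (hm : m ≤ #Z) : ∃ I : Finset ι, m ≤ #{z ∈ Z | c z ∈ I} ∧ #{z ∈ Z | c z ∈ I} ≤ m + s := by
  classical
  obtain ⟨I, hmI, hmin⟩ := exists_minimal_of_wellFoundedLT
    (fun I ↦ m ≤ #{z ∈ Z | c z ∈ I})
    ⟨Z.image c, by rwa [Finset.filter_true_of_mem fun z hz ↦ Finset.mem_image_of_mem c hz]⟩
  refine ⟨I, hmI, ?_⟩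
  obtain rfl | ⟨i, hi⟩ := I.eq_empty_or_nonempty
  · simp
  have hlt : #{z ∈ Z | c z ∈ I.erase i} < m := by
    by_contra! hge
    exact Finset.notMem_erase i I (hmin hge (I.erase_subset i) hi)
  have hsub : {z ∈ Z | c z ∈ I} ⊆
      ({z ∈ Z | c z ∈ I.erase i} ∪ {z ∈ Z | c z = i} : Finset V) := by grind
  have := (Finset.card_le_card hsub).trans (Finset.card_union_le _ _)
  have := hs i
  omega

lemma HasPurePair.id_of_colour [DecidableEq ι] {s k : ℕ} (h : HasPurePair G c Z (3 * k))
    (hs : ∀ i, #{z ∈ Z | c z = i} ≤ s) (hsk : s ≤ k) : HasPurePair G id Z k := by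
  obtain ⟨U, hU, W, hW, hmU, hmW, hpure⟩ := h
  obtain ⟨J, hJ, hJ'⟩ := exists_card_filter_colour_mem (Z := U) (m := k)
    (fun i ↦ (Finset.card_le_card (Finset.filter_subset_filter _ hU)).trans (hs i)) (by omega)
  have hsplitU := Finset.card_filter_add_card_filter_not (s := U) (c · ∈ J)
  have hsplitW := Finset.card_filter_add_card_filter_not (s := W) (c · ∈ J)
  have hpure_id : ∀ U' ⊆ U, ∀ W' ⊆ W, ColourDisjoint c U' W' → k ≤ #U' → k ≤ #W' →
      HasPurePair G id Z k := fun U' hU' W' hW' hc hkU hkW ↦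
    ⟨U', hU'.trans hU, W', hW'.trans hW, hkU, hkW, hpure.1.mono hU' hW',
      hpure.2.imp (fun h u hu w hw _ ↦ h u (hU' hu) w (hW' hw) (hc u hu w hw))
        fun h u hu w hw _ ↦ h u (hU' hu) w (hW' hw) (hc u hu w hw)⟩
  obtain hkW | hkW : k ≤ #{z ∈ W | c z ∉ J} ∨ k ≤ #{z ∈ W | c z ∈ J} := by omega
  · exact hpure_id _ (Finset.filter_subset _ _) _ (Finset.filter_subset _ _)
      (colourDisjoint_filter_mem_filter_notMem c U W J) hJ hkW
  · exact hpure_id _ (Finset.filter_subset _ _) _ (Finset.filter_subset _ _)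
      (colourDisjoint_filter_mem_filter_notMem c W U J).symm (by omega) hkW

lemma RainbowFree.hasPurePair_id [DecidableEq ι] {s k : ℕ} (hZ : RainbowFree (pathGraph 4) G c Z)
    (hs : ∀ i, #{z ∈ Z | c z = i} ≤ s) (hsk : s ≤ k) (hk : 80 * k ≤ #Z) :
    HasPurePair G id Z k := by
  obtain ⟨I, hI, hI'⟩ := exists_card_filter_colour_mem (m := 6 * k) hs (by omega)
  set Z' := {z ∈ Z | c z ∉ I}
  have hZ' : Z' ⊆ Z := Finset.filter_subset _ _
  have hsplitZ : #{z ∈ Z | c z ∈ I} + #Z' = #Z := Finset.card_filter_add_card_filter_not _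
  obtain ⟨J, hJ, hJ'⟩ := exists_card_filter_colour_mem (Z := Z') (m := 36 * k)
    (fun i ↦ (Finset.card_le_card (Finset.filter_subset_filter _ hZ')).trans (hs i)) (by omega)
  have hsplitZ' := Finset.card_filter_add_card_filter_not (s := Z') (c · ∈ J)
  have hdisj := colourDisjoint_filter_mem_filter_notMem c Z Z I
  have hpair : HasPurePair G c Z (3 * k) := hZ.hasPurePair_of_colourDisjoint
    (Finset.filter_subset _ _) ((Finset.filter_subset (c · ∈ J) Z').trans hZ')
    ((Finset.filter_subset (c · ∉ J) Z').trans hZ')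
    (hdisj.mono subset_rfl (Finset.filter_subset _ _))
    (hdisj.mono subset_rfl (Finset.filter_subset _ _))
    (colourDisjoint_filter_mem_filter_notMem c Z' Z' J) (by omega) (by omega) (by omega)
  exact hpair.id_of_colour hs hsk

lemma two_pow_mul_le_kappaNum_induce [DecidableEq ι] {s : ℕ} {μ : ℝ} (j : ℕ)
    (hZ : RainbowFree (pathGraph 4) G c Z) (hs : ∀ i, #{z ∈ Z | c z = i} ≤ s)
    (hμ : ∀ A ⊆ Z, s ≤ #A → μ ≤ kappaNum (G.induce A)) (hcard : 128 ^ j * s ≤ #Z) :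
    2 ^ j * μ ≤ kappaNum (G.induce Z) := by
  induction j generalizing Z with
  | zero => simpa using hμ Z subset_rfl (by simpa using hcard)
  | succ j ih =>
    obtain ⟨U, hU, W, hW, hkU, hkW, hpure⟩ := hZ.hasPurePair_id (k := 128 ^ j * s) hs
      (Nat.le_mul_of_pos_left _ (by positivity)) (by rw [pow_succ] at hcard; linarith)
    have hpart : ∀ Z' ⊆ Z, 128 ^ j * s ≤ #Z' → 2 ^ j * μ ≤ kappaNum (G.induce Z') :=
      fun Z' hZ' ↦ ih (hZ.mono hZ')
        (fun i ↦ (Finset.card_le_card (Finset.filter_subset_filter _ hZ')).trans (hs i))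
        (fun A hA ↦ hμ A (hA.trans hZ'))
    calc (2 : ℝ) ^ (j + 1) * μ = 2 ^ j * μ + 2 ^ j * μ := by ring
      _ ≤ kappaNum (G.induce U) + kappaNum (G.induce W) :=
        add_le_add (hpart U hU hkU) (hpart W hW hkW)
      _ ≤ kappaNum (G.induce Z) := mod_cast hpure.kappaNum_add_le hU hW

end Rainbow

section Combs

variable {V : Type*} {G : SimpleGraph V} {A B T T' B' : Finset V} {a b : V} {n D : ℕ}

open scoped Classical in
/-- The vertices of `B` whose only neighbour in `T` is `a`, for `a ∈ T`: the candidates for the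
tooth at the handle `a` of a comb. -/
noncomputable def privateNbrs (G : SimpleGraph V) (T B : Finset V) (a : V) : Finset V :=
  {b ∈ B | G.Adj a b ∧ ∀ a' ∈ T, G.Adj a' b → a' = a}

@[simp]
lemma mem_privateNbrs :
    b ∈ privateNbrs G T B a ↔ b ∈ B ∧ G.Adj a b ∧ ∀ a' ∈ T, G.Adj a' b → a' = a := by
  simp [privateNbrs]

lemma privateNbrs_mono (hT : T' ⊆ T) (hB : B ⊆ B') (a : V) :
    privateNbrs G T B a ⊆ privateNbrs G T' B' a := fun b hb ↦ by
  obtain ⟨hbB, hab, h⟩ := mem_privateNbrs.1 hb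
  exact mem_privateNbrs.2 ⟨hB hbB, hab, fun a' ha' ↦ h a' (hT ha')⟩

lemma exists_subset_forall_card_nbrsIn_sdiff_lt [DecidableEq V] (G : SimpleGraph V)
    (A B : Finset V) {t : ℕ} (ht : 0 < t) :
    ∃ S ⊆ A, t * #S ≤ #(S.biUnion (nbrsIn G B)) ∧
      ∀ a ∈ A, #(nbrsIn G (B \ S.biUnion (nbrsIn G B)) a) < t := by
  induction A using Finset.induction_on with
  | empty => exact ⟨∅, by simp⟩
  | insert a A ha ih =>
    obtain ⟨S, hSA, hS, hlt⟩ := ih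
    by_cases hat : #(nbrsIn G (B \ S.biUnion (nbrsIn G B)) a) < t
    · exact ⟨S, hSA.trans (Finset.subset_insert a A), hS,
        (Finset.forall_mem_insert _ _ _).2 ⟨hat, hlt⟩⟩
    have hbiUnion : (insert a S).biUnion (nbrsIn G B) =
        S.biUnion (nbrsIn G B) ∪ nbrsIn G (B \ S.biUnion (nbrsIn G B)) a := by
      ext b
      simp only [Finset.biUnion_insert, Finset.mem_union, mem_nbrsIn, Finset.mem_sdiff]
      grind
    have hcard : #((insert a S).biUnion (nbrsIn G B)) = #(S.biUnion (nbrsIn G B)) +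
        #(nbrsIn G (B \ S.biUnion (nbrsIn G B)) a) := by
      rw [hbiUnion, Finset.card_union_of_disjoint]
      exact Finset.disjoint_sdiff.mono_right (nbrsIn_subset _ _ _)
    refine ⟨insert a S, Finset.insert_subset_insert a hSA, ?_, ?_⟩
    · rw [Finset.card_insert_of_notMem fun h ↦ ha (hSA h), hcard, mul_add_one]
      omega
    · have hsub := Finset.biUnion_subset_biUnion_of_subset_left (nbrsIn G B)
        (Finset.subset_insert a S)
      refine (Finset.forall_mem_insert _ _ _).2 ⟨?_, fun a' ha' ↦ (Finset.card_le_card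
        (nbrsIn_mono (Finset.sdiff_subset_sdiff subset_rfl hsub) a')).trans_lt (hlt a' ha')⟩
      have hempty : nbrsIn G (B \ (insert a S).biUnion (nbrsIn G B)) a = ∅ := by
        ext b
        simp only [mem_nbrsIn, Finset.mem_sdiff, Finset.biUnion_insert, Finset.mem_union]
        grind
      rwa [hempty]

lemma two_mul_card_biUnion_nbrsIn_le [DecidableEq V] (G : SimpleGraph V) (A B : Finset V) :
    2 * #(A.biUnion (nbrsIn G B)) ≤ ∑ a ∈ A, (#(nbrsIn G B a) + #(privateNbrs G A B a)) := by
  set N := A.biUnion (nbrsIn G B)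
  have hdouble : ∀ F : V → Finset V, (∀ a ∈ A, F a ⊆ N) →
      ∑ a ∈ A, #(F a) = ∑ b ∈ N, #{a ∈ A | b ∈ F a} := fun F hF ↦ by
    refine .trans (Finset.sum_congr rfl fun a ha ↦ ?_)
      (Finset.sum_card_bipartiteAbove_eq_sum_card_bipartiteBelow fun a b ↦ b ∈ F a)
    rw [Finset.bipartiteAbove, Finset.filter_mem_eq_inter, Finset.inter_eq_right.2 (hF a ha)]
  have hnbrs : ∀ a ∈ A, nbrsIn G B a ⊆ N := fun a ha ↦ Finset.subset_biUnion_of_mem _ ha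
  have hprivate : ∀ a ∈ A, privateNbrs G A B a ⊆ N := fun a ha b hb ↦
    hnbrs a ha (mem_nbrsIn.2 ((mem_privateNbrs.1 hb).imp_right And.left))
  rw [Finset.sum_add_distrib, hdouble _ hnbrs, hdouble _ hprivate, ← Finset.sum_add_distrib,
    mul_comm, ← smul_eq_mul]
  refine Finset.card_nsmul_le_sum _ _ _ fun b hb ↦ ?_
  obtain ⟨a, ha, hab⟩ := Finset.mem_biUnion.1 hb
  have ha_mem : a ∈ {a ∈ A | b ∈ nbrsIn G B a} := Finset.mem_filter.2 ⟨ha, hab⟩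
  by_cases hunique : ∀ a' ∈ A, G.Adj a' b → a' = a
  · have hab_private : b ∈ privateNbrs G A B a :=
      mem_privateNbrs.2 ⟨(mem_nbrsIn.1 hab).1, (mem_nbrsIn.1 hab).2, hunique⟩
    exact add_le_add (Finset.one_le_card.2 ⟨a, ha_mem⟩)
      (Finset.one_le_card.2 ⟨a, Finset.mem_filter.2 ⟨ha, hab_private⟩⟩)
  · push Not at hunique
    obtain ⟨a', ha', hab', hne⟩ := hunique
    exact le_add_right (Finset.one_lt_card.2 ⟨a', Finset.mem_filter.2
      ⟨ha', mem_nbrsIn.2 ⟨(mem_nbrsIn.1 hab).1, hab'⟩⟩, a, ha_mem, hne⟩)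

lemma exists_subset_le_card_privateNbrs [DecidableEq V] (hD : 0 < D)
    (hdeg : ∀ a ∈ A, #(nbrsIn G B a) ≤ D)
    (hA : 2 * (#A * D) ≤ 3 * #(A.biUnion (nbrsIn G B))) :
    ∃ T ⊆ A, #A ≤ 6 * #T ∧ ∀ a ∈ T, D ≤ 6 * #(privateNbrs G T B a) := by
  refine ⟨{a ∈ A | D ≤ 6 * #(privateNbrs G A B a)}, Finset.filter_subset _ _, ?_, fun a ha ↦
    (Finset.mem_filter.1 ha).2.trans (Nat.mul_le_mul_left 6 (Finset.card_le_card
      (privateNbrs_mono (Finset.filter_subset _ _) subset_rfl a)))⟩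
  set T := {a ∈ A | D ≤ 6 * #(privateNbrs G A B a)}
  have hprivate : 6 * ∑ a ∈ A, #(privateNbrs G A B a) ≤ 6 * (#T * D) + #A * D := by
    rw [← Finset.sum_filter_add_sum_filter_not A (fun a ↦ D ≤ 6 * #(privateNbrs G A B a)),
      mul_add, Finset.mul_sum (s := Finset.filter (fun a ↦ ¬ _) A)]
    have hT : ∑ a ∈ T, #(privateNbrs G A B a) ≤ #T * D := by
      refine Finset.sum_le_card_nsmul _ _ _ fun a ha ↦ ?_
      exact (Finset.card_le_card fun b hb ↦ mem_nbrsIn.2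
        ((mem_privateNbrs.1 hb).imp_right And.left)).trans (hdeg a (Finset.mem_filter.1 ha).1)
    refine add_le_add (Nat.mul_le_mul_left 6 hT) ?_
    refine (Finset.sum_le_card_nsmul _ _ D fun a ha ↦ ?_).trans
      (Nat.mul_le_mul_right D (Finset.card_filter_le _ _))
    exact (not_le.1 (Finset.mem_filter.1 ha).2).le
  have hdeg_sum : ∑ a ∈ A, #(nbrsIn G B a) ≤ #A * D := by
    simpa using Finset.sum_le_card_nsmul A _ D hdeg
  have hdouble := two_mul_card_biUnion_nbrsIn_le G A B
  rw [Finset.sum_add_distrib] at hdouble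
  exact Nat.le_of_mul_le_mul_right (by linarith) hD

lemma exists_subset_card_nbrsIn_le_of_no_comb (hD : 0 < D) (hdeg : ∀ a ∈ A, #(nbrsIn G B a) ≤ D)
    (hcomb : ∀ T ⊆ A, 128 ≤ #T → ∃ a ∈ T, #(privateNbrs G T B a) * #T ^ 2 < n) :
    ∃ B' ⊆ B, (∀ a ∈ A, #(nbrsIn G B' a) ≤ 2 * D / 3) ∧
      (#B : ℝ) ≤ #B' + 768 * D + 15 * √(n * D) := by
  classical
  obtain ⟨S, hSA, hS, hlt⟩ :=
    exists_subset_forall_card_nbrsIn_sdiff_lt G A B (t := 2 * D / 3 + 1) (by omega)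
  have hSdeg : ∀ a ∈ S, #(nbrsIn G B a) ≤ D := fun a ha ↦ hdeg a (hSA ha)
  obtain ⟨T, hTS, hST, hT⟩ := exists_subset_le_card_privateNbrs hD hSdeg (by
    have := Nat.mul_le_mul_left (#S) (show 2 * D ≤ 3 * (2 * D / 3 + 1) by omega)
    linarith)
  set N := S.biUnion (nbrsIn G B)
  have hNB : N ⊆ B := Finset.biUnion_subset.2 fun a _ ↦ nbrsIn_subset G B a
  have hN : #N ≤ #S * D := Finset.card_biUnion_le_card_mul _ _ _ hSdeg
  refine ⟨B \ N, Finset.sdiff_subset, fun a ha ↦ Nat.le_of_lt_succ (hlt a ha), ?_⟩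
  have hcard : (#B : ℝ) = #(B \ N) + #N := mod_cast (Finset.card_sdiff_add_card_eq_card hNB).symm
  suffices hNle : (#N : ℝ) ≤ 768 * D + 15 * √(n * D) by linarith
  obtain hT128 | hT128 := lt_or_ge #T 128
  · have hN768 : #N ≤ 768 * D := hN.trans (Nat.mul_le_mul_right D (by omega))
    have : (#N : ℝ) ≤ 768 * D := mod_cast hN768
    linarith [Real.sqrt_nonneg ((n : ℝ) * D)]
  · obtain ⟨a, ha, hprivate⟩ := hcomb T (hTS.trans hSA) hT128
    have hTD : D * #T ^ 2 ≤ 6 * n := by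
      have := Nat.mul_le_mul_right (#T ^ 2) (hT a ha)
      linarith
    have hN_sq : #N ^ 2 ≤ 15 ^ 2 * (n * D) := calc
      #N ^ 2 ≤ (6 * #T * D) ^ 2 := Nat.pow_le_pow_left (hN.trans (Nat.mul_le_mul_right D hST)) 2
      _ = 36 * D * (D * #T ^ 2) := by ring
      _ ≤ 36 * D * (6 * n) := Nat.mul_le_mul_left _ hTD
      _ ≤ 15 ^ 2 * (n * D) := by linarith [Nat.zero_le (n * D)]
    have hN_le : (#N : ℝ) ≤ 15 * √(n * D) := by
      refine le_of_sq_le_sq ?_ (by positivity)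
      rw [mul_pow, Real.sq_sqrt (by positivity)]
      exact_mod_cast hN_sq
    linarith [Nat.cast_nonneg (α := ℝ) D]

lemma card_le_of_no_comb (hcover : ∀ b ∈ B, ∃ a ∈ A, G.Adj a b)
    (hdeg : ∀ a ∈ A, #(nbrsIn G B a) ≤ D)
    (hcomb : ∀ T ⊆ A, 128 ≤ #T → ∃ a ∈ T, #(privateNbrs G T B a) * #T ^ 2 < n) :
    (#B : ℝ) ≤ 2304 * D + 90 * √(n * D) := by
  -- The constants solve `768 + 2 / 3 * 2304 = 2304` and `15 + 5 / 6 * 90 = 90`.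
  induction D using Nat.strong_induction_on generalizing B with
  | _ D ih =>
    obtain rfl | hD := D.eq_zero_or_pos
    · have hB : B = ∅ := Finset.eq_empty_of_forall_notMem fun b hb ↦ by
        obtain ⟨a, ha, hab⟩ := hcover b hb
        exact Finset.notMem_empty b (Finset.card_eq_zero.1 (Nat.le_zero.1 (hdeg a ha)) ▸
          mem_nbrsIn.2 ⟨hb, hab⟩)
      simp [hB]
    obtain ⟨B', hB', hdeg', hcard⟩ := exists_subset_card_nbrsIn_le_of_no_comb hD hdeg hcomb
    have hB'card := ih (2 * D / 3) (by omega) (fun b hb ↦ hcover b (hB' hb)) hdeg'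
      fun T hT hT128 ↦ by
        obtain ⟨a, ha, hlt⟩ := hcomb T hT hT128
        exact ⟨a, ha, (Nat.mul_le_mul_right _ (Finset.card_le_card
          (privateNbrs_mono subset_rfl hB' a))).trans_lt hlt⟩
    have hdiv : ((2 * D / 3 : ℕ) : ℝ) ≤ 2 / 3 * D := by
      have := Nat.cast_div_le (α := ℝ) (m := 2 * D) (n := 3)
      push_cast at this
      linarith
    have hsqrt : √(n * (2 * D / 3 : ℕ)) ≤ 5 / 6 * √(n * D) := by
      rw [Real.sqrt_le_left (by positivity), mul_pow, Real.sq_sqrt (by positivity)]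
      have := mul_le_mul_of_nonneg_left hdiv (Nat.cast_nonneg (α := ℝ) n)
      have hnD : (0 : ℝ) ≤ n * D := by positivity
      linarith
    linarith

lemma nonempty_starExpansion_embedding {W : Type*} {H : SimpleGraph W} (φ : H ↪g G) (a : W → V)
    (v : V) (hφa : ∀ i j, G.Adj (φ i) (a j) ↔ i = j) (haa : ∀ i j, ¬ G.Adj (a i) (a j))
    (hva : ∀ i, G.Adj v (a i)) (hvφ : ∀ i, ¬ G.Adj v (φ i)) (hne : ∀ i, φ i ≠ v) :
    Nonempty (starExpansion H ↪g G) := by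
  have ha : Function.Injective a := fun i j h ↦ (hφa i j).1 (h ▸ (hφa i i).2 rfl)
  have hinj : Function.Injective (Sum.elim φ (Sum.elim a fun _ : Unit ↦ v)) :=
    φ.injective.sumElim (ha.sumElim (Function.injective_of_subsingleton _) fun i _ ↦ (hva i).ne')
      fun i ↦ Sum.forall.2 ⟨fun j h ↦ hvφ i (h ▸ hva j), fun _ ↦ hne i⟩
  refine ⟨⟨_, hinj⟩, ?_⟩
  have hφ : ∀ i j, G.Adj (φ i) (φ j) ↔ i ≠ j ∧ (H.Adj i j ∨ H.Adj j i) := fun i j ↦ by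
    rw [φ.map_adj_iff, H.adj_comm j i, or_self, iff_and_self]
    exact Adj.ne
  rintro (i | i | _) (j | j | _) <;>
    simp [starExpansion, hφ, hφa, haa, hva, hvφ, G.adj_comm (a _) (φ _), G.adj_comm (φ _) v,
      G.adj_comm (a _) v]

lemma rainbowFree_of_comb {W : Type*} {H : SimpleGraph W} {Z : Finset V} {c : V → V} {v : V}
    (hG : ¬ Nonempty (starExpansion H ↪g G)) (hT : ∀ a ∈ T, G.Adj v a)
    (hstable : ∀ a ∈ T, ∀ a' ∈ T, ¬ G.Adj a a') (hZv : ∀ b ∈ Z, b ≠ v ∧ ¬ G.Adj v b)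
    (hcT : ∀ b ∈ Z, c b ∈ T) (hadj : ∀ b ∈ Z, ∀ a ∈ T, G.Adj a b ↔ a = c b) :
    RainbowFree H G c Z := by
  refine fun φ hφ hinj ↦ hG (nonempty_starExpansion_embedding φ (c ∘ φ) v ?_
    (fun i j ↦ hstable _ (hcT _ (hφ i)) _ (hcT _ (hφ j))) (fun i ↦ hT _ (hcT _ (hφ i)))
    (fun i ↦ (hZv _ (hφ i)).2) fun i ↦ (hZv _ (hφ i)).1)
  intro i j
  rw [G.adj_comm]
  exact (hadj _ (hφ i) _ (hcT _ (hφ j))).trans ⟨fun h ↦ (hinj h).symm, fun h ↦ h ▸ rfl⟩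

lemma exists_comb_of_forall_le_card_privateNbrs [DecidableEq V] {s : ℕ}
    (hs : ∀ a ∈ T, s ≤ #(privateNbrs G T B a)) :
    ∃ Z ⊆ B, ∃ c : V → V, #Z = #T * s ∧ (∀ b ∈ Z, c b ∈ T) ∧
      (∀ b ∈ Z, ∀ a ∈ T, G.Adj a b ↔ a = c b) ∧ ∀ a, #{b ∈ Z | c b = a} ≤ s := by
  choose! F hF hFcard using fun a ha ↦ Finset.exists_subset_card_eq (hs a ha)
  have hprivate : ∀ a ∈ T, ∀ b ∈ F a, b ∈ B ∧ G.Adj a b ∧ ∀ a' ∈ T, G.Adj a' b → a' = a :=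
    fun a ha b hb ↦ mem_privateNbrs.1 (hF a ha hb)
  choose! c hcT hcF using fun b (hb : b ∈ T.biUnion F) ↦ Finset.mem_biUnion.1 hb
  refine ⟨T.biUnion F, Finset.biUnion_subset.2 fun a ha b hb ↦ (hprivate a ha b hb).1, c, ?_, hcT,
    fun b hb a ha ↦ ?_, fun a ↦ ?_⟩
  · rw [Finset.card_biUnion fun a ha a' ha' hne ↦ Finset.disjoint_left.2 fun b hb hb' ↦
      hne ((hprivate a' ha' b hb').2.2 a ha (hprivate a ha b hb).2.1),
      Finset.sum_const_nat hFcard]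
  · have := hprivate _ (hcT b hb) b (hcF b hb)
    exact ⟨this.2.2 a ha, fun h ↦ h ▸ this.2.1⟩
  · by_cases ha : a ∈ T
    · refine (Finset.card_le_card fun b hb ↦ ?_).trans (hFcard a ha).le
      obtain ⟨hbZ, rfl⟩ := Finset.mem_filter.1 hb
      exact hcF b hbZ
    · rw [Finset.filter_false_of_mem fun b hb (h : c b = a) ↦ ha (h ▸ hcT b hb)]
      exact Nat.zero_le s

end Combs

section Critical

variable {V : Type*} {G : SimpleGraph V} {σ : ℝ} {A B N T U X Y Z : Finset V} {v : V}

/-- `Y` is `σ`-critical if the ratio of `kappaNum` to the `σ`-th power of the number of vertices is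
minimal at `Y` among the subsets of `Y`; equivalently, `kappaNum` decays slowly on passing to
subsets of `Y`. -/
def IsKappaCritical (G : SimpleGraph V) (σ : ℝ) (Y : Finset V) : Prop :=
  ∀ A ⊆ Y, (kappaNum (G.induce Y) : ℝ) * (#A / #Y) ^ σ ≤ kappaNum (G.induce A)

lemma IsKappaCritical.compl (hY : IsKappaCritical G σ Y) : IsKappaCritical Gᶜ σ Y := by
  simpa only [IsKappaCritical, kappaNum_induce_compl] using hY

lemma exists_isKappaCritical_subset (G : SimpleGraph V) (hσ : 0 < σ) (hX : X.Nonempty) :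
    ∃ Y ⊆ X, Y.Nonempty ∧ IsKappaCritical G σ Y ∧
      (kappaNum (G.induce Y) : ℝ) / #Y ^ σ ≤ kappaNum (G.induce X) / #X ^ σ := by
  classical
  obtain ⟨Y, hY, hmin⟩ := Finset.exists_min_image {A ∈ X.powerset | A.Nonempty}
    (fun A ↦ (kappaNum (G.induce A) : ℝ) / #A ^ σ) ⟨X, by simpa using hX⟩
  simp only [Finset.mem_filter, Finset.mem_powerset, and_imp] at hY hmin
  refine ⟨Y, hY.1, hY.2, fun A hA ↦ ?_, hmin X subset_rfl hX⟩
  obtain rfl | hAne := A.eq_empty_or_nonempty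
  · simp [Real.zero_rpow hσ.ne']
  have hApos : (0 : ℝ) < (#A : ℝ) ^ σ := Real.rpow_pos_of_pos (mod_cast hAne.card_pos) σ
  rw [Real.div_rpow (by positivity) (by positivity), mul_div_left_comm, ← le_div_iff₀' hApos]
  exact hmin A (hA.trans hY.1) hAne

lemma IsKappaCritical.alphaNum_mul_rpow_le (hY : IsKappaCritical G σ Y) (hne : Y.Nonempty)
    (hA : A ⊆ Y) : (alphaNum (G.induce Y) : ℝ) * (#A / #Y) ^ σ ≤ alphaNum (G.induce A) := by
  have hω : (0 : ℝ) < omegaNum (G.induce Y) := mod_cast omegaNum_induce_pos hne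
  refine le_of_mul_le_mul_right ?_ hω
  calc (alphaNum (G.induce Y) : ℝ) * (#A / #Y) ^ σ * omegaNum (G.induce Y)
      = kappaNum (G.induce Y) * (#A / #Y) ^ σ := by rw [kappaNum]; push_cast; ring
    _ ≤ kappaNum (G.induce A) := hY A hA
    _ ≤ alphaNum (G.induce A) * omegaNum (G.induce Y) :=
        mod_cast Nat.mul_le_mul_left _ (omegaNum_induce_mono hA)

lemma IsKappaCritical.card_le_of_alphaNum_add_le (hY : IsKappaCritical G σ Y) (hne : Y.Nonempty)
    (hσ : σ ≤ 1) (hN : N ⊆ Y) (hU : U ⊆ Y)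
    (hadd : alphaNum (G.induce N) + alphaNum (G.induce U) ≤ alphaNum (G.induce Y)) :
    (#U : ℝ) ≤ (1 - (#N / #Y) ^ σ) * #Y := by
  have hα : (0 : ℝ) < alphaNum (G.induce Y) := mod_cast alphaNum_induce_pos hne
  have hsum : ((#N : ℝ) / #Y) ^ σ + (#U / #Y) ^ σ ≤ 1 := by
    refine le_of_mul_le_mul_left ?_ hα
    rw [mul_add, mul_one]
    exact (add_le_add (hY.alphaNum_mul_rpow_le hne hN) (hY.alphaNum_mul_rpow_le hne hU)).trans
      (mod_cast hadd)
  have hUY : (#U : ℝ) / #Y ≤ (#U / #Y) ^ σ :=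
    Real.self_le_rpow_of_le_one (by positivity)
      (div_le_one_of_le₀ (mod_cast Finset.card_le_card hU) (by positivity)) hσ
  rw [← div_le_iff₀ (mod_cast hne.card_pos)]
  linarith

lemma IsKappaCritical.exists_adj (hY : IsKappaCritical G σ Y) (hσ : σ < 1) (hcard : 2 ≤ #Y) :
    ∃ u ∈ Y, ∃ w ∈ Y, G.Adj u w := by
  classical
  by_contra! hstable
  have hne : Y.Nonempty := Finset.card_pos.1 (by omega)
  obtain ⟨v, hv⟩ := hne
  have hadd : alphaNum (G.induce ({v} : Finset V)) + alphaNum (G.induce (Y.erase v)) ≤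
      alphaNum (G.induce Y) := by
    simp only [alphaNum_induce]
    refine omegaNum_induce_add_le (by simpa using hv) (Finset.erase_subset v Y) ?_
    simp only [Finset.mem_singleton, forall_eq, Finset.mem_erase, compl_adj]
    exact fun w hw ↦ ⟨hw.1.symm, hstable v hv w hw.2⟩
  have hle := hY.card_le_of_alphaNum_add_le ⟨v, hv⟩ hσ.le (by simpa using hv)
    (Finset.erase_subset v Y) hadd
  have hY2 : (2 : ℝ) ≤ #Y := mod_cast hcard
  rw [Finset.cast_card_erase_of_mem hv, Finset.card_singleton, Nat.cast_one, one_sub_mul,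
    sub_le_sub_iff_left, ← le_div_iff₀ (by linarith)] at hle
  refine hle.not_gt ((Real.rpow_one _).symm.trans_lt
    (Real.rpow_lt_rpow_of_exponent_gt (by positivity) ?_ hσ))
  rw [div_lt_one] <;> linarith

lemma rpow_sq_lt_two_pow_log {k : ℕ} (hk : 128 ≤ k) :
    ((k : ℝ) ^ 2) ^ (28⁻¹ : ℝ) < 2 ^ Nat.log 128 k := by
  -- The exponent `28⁻¹` is what makes `(128 ^ (j + 1)) ^ 2 ≤ (2 ^ j) ^ 28` for all `j ≥ 1`.
  have hlog : 1 ≤ Nat.log 128 k := Nat.log_pos (by norm_num) hk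
  have hkpow : k < 2 ^ (14 * Nat.log 128 k) := calc
    k < 128 ^ (Nat.log 128 k + 1) := Nat.lt_pow_succ_log_self (by norm_num) k
    _ = 2 ^ (7 * (Nat.log 128 k + 1)) := by rw [pow_mul]; norm_num
    _ ≤ 2 ^ (14 * Nat.log 128 k) := Nat.pow_le_pow_right two_pos (by omega)
  rw [Real.rpow_inv_lt_iff_of_pos (by positivity) (by positivity) (by norm_num)]
  calc (k : ℝ) ^ 2 < (2 ^ (14 * Nat.log 128 k)) ^ 2 :=
        pow_lt_pow_left₀ (mod_cast hkpow) (by positivity) two_ne_zero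
    _ = ((2 : ℝ) ^ Nat.log 128 k) ^ (28 : ℝ) := by
        rw [show (28 : ℝ) = (28 : ℕ) by norm_num, Real.rpow_natCast, ← pow_mul, ← pow_mul]
        congr 1
        ring

lemma IsKappaCritical.mul_sq_lt_card_of_rainbowFree {ι : Type*} {c : V → ι} [DecidableEq ι]
    {k s : ℕ} (hY : IsKappaCritical G 28⁻¹ Y) (hne : Y.Nonempty) (hZY : Z ⊆ Y)
    (hZ : RainbowFree (pathGraph 4) G c Z) (hs : ∀ i, #{z ∈ Z | c z = i} ≤ s) (hk : 128 ≤ k)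
    (hcard : k * s ≤ #Z) : s * k ^ 2 < #Y := by
  by_contra! hle
  have hk0 : (0 : ℝ) < k := mod_cast (by omega : 0 < k)
  have hn : (0 : ℝ) < #Y := mod_cast hne.card_pos
  have hκ : (0 : ℝ) < kappaNum (G.induce Y) := mod_cast kappaNum_induce_pos hne
  have hμ : ∀ A ⊆ Z, s ≤ #A →
      (kappaNum (G.induce Y) : ℝ) * (1 / (k : ℝ) ^ 2) ^ (28⁻¹ : ℝ) ≤ kappaNum (G.induce A) := by
    refine fun A hA hsA ↦ le_trans ?_ (hY A (hA.trans hZY))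
    refine mul_le_mul_of_nonneg_left (Real.rpow_le_rpow (by positivity) ?_ (by norm_num)) hκ.le
    rw [div_le_div_iff₀ (by positivity) hn, one_mul]
    exact_mod_cast hle.trans (Nat.mul_le_mul_right _ hsA)
  have hgrow := (two_pow_mul_le_kappaNum_induce (Nat.log 128 k) hZ hs hμ
    ((Nat.mul_le_mul_right s (Nat.pow_log_le_self 128 (by omega))).trans hcard)).trans
    (Nat.cast_le.2 (kappaNum_induce_mono hZY))
  rw [Real.div_rpow zero_le_one (by positivity), Real.one_rpow, mul_one_div, mul_div_left_comm,
    mul_le_iff_le_one_right hκ, div_le_one (by positivity)] at hgrow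
  exact hgrow.not_gt (rpow_sq_lt_two_pow_log hk)

lemma IsKappaCritical.exists_card_privateNbrs_mul_sq_lt (hY : IsKappaCritical G 28⁻¹ Y)
    (hG : ¬ Nonempty (starExpansion (pathGraph 4) ↪g G)) (hne : Y.Nonempty) (hBY : B ⊆ Y)
    (hBv : ∀ b ∈ B, b ≠ v ∧ ¬ G.Adj v b) (hTv : ∀ a ∈ T, G.Adj v a)
    (hstable : ∀ a ∈ T, ∀ a' ∈ T, ¬ G.Adj a a') (hcard : 128 ≤ #T) :
    ∃ a ∈ T, #(privateNbrs G T B a) * #T ^ 2 < #Y := by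
  classical
  obtain ⟨a, ha, hmin⟩ := T.exists_min_image (fun a ↦ #(privateNbrs G T B a))
    (Finset.card_pos.1 (by omega))
  obtain ⟨Z, hZB, c, hZ, hcT, hadj, hclass⟩ := exists_comb_of_forall_le_card_privateNbrs hmin
  have hrainbow : RainbowFree (pathGraph 4) G c Z :=
    rainbowFree_of_comb hG hTv hstable (fun b hb ↦ hBv b (hZB hb)) hcT hadj
  exact ⟨a, ha, hY.mul_sq_lt_card_of_rainbowFree hne (hZB.trans hBY) hrainbow hclass hcard hZ.ge⟩

lemma IsKappaCritical.card_mul_rpow_le {D : ℕ} (hY : IsKappaCritical G 28⁻¹ Y)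
    (hG : ¬ Nonempty (starExpansion (pathGraph 4) ↪g G)) (hv : v ∈ Y)
    (hdeg : ∀ u ∈ Y, #(nbrsIn G Y u) ≤ D) :
    (#Y : ℝ) * (#(nbrsIn G Y v) / #Y) ^ (28⁻¹ : ℝ) ≤
      2305 * D + 90 * √(#Y * D) + 1 := by
  classical
  set N := nbrsIn G Y v
  have hNY : N ⊆ Y := nbrsIn_subset G Y v
  obtain ⟨S, hSN, hS, hScard⟩ := exists_isClique_card_eq_omegaNum_induce Gᶜ N
  have hSY : S ⊆ Y := hSN.trans hNY
  set U := {y ∈ Y | y ∉ S ∧ ∀ a ∈ S, ¬ G.Adj a y}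
  set B := {y ∈ Y | (y ≠ v ∧ ¬ G.Adj v y) ∧ ∃ a ∈ S, G.Adj a y}
  have hcover : #Y ≤ #U + #B + #N + 1 := by
    have hsub : Y ⊆ insert v (U ∪ B ∪ N) := fun y hy ↦ by
      have : y ∈ S → G.Adj v y := fun hyS ↦ (mem_nbrsIn.1 (hSN hyS)).2
      simp only [Finset.mem_insert, Finset.mem_union, U, B, N, Finset.mem_filter, mem_nbrsIn]
      grind
    refine (Finset.card_le_card hsub).trans ((Finset.card_insert_le _ _).trans ?_)
    exact Nat.succ_le_succ ((Finset.card_union_le _ _).trans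
      (Nat.add_le_add_right (Finset.card_union_le _ _) _))
  have hadd : alphaNum (G.induce N) + alphaNum (G.induce U) ≤ alphaNum (G.induce Y) := by
    simp only [alphaNum_induce, ← hScard]
    refine (Nat.add_le_add_right (card_le_omegaNum_induce subset_rfl hS) _).trans
      (omegaNum_induce_add_le hSY (Finset.filter_subset _ _) fun a ha y hy ↦ ?_)
    obtain ⟨-, hyS, hy⟩ := Finset.mem_filter.1 hy
    exact (compl_adj _ _ _).2 ⟨fun h ↦ hyS (h ▸ ha), hy a ha⟩
  have hU : (#U : ℝ) ≤ (1 - (#N / #Y) ^ (28⁻¹ : ℝ)) * #Y :=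
    hY.card_le_of_alphaNum_add_le ⟨v, hv⟩ (by norm_num) hNY (Finset.filter_subset _ _) hadd
  have hB : (#B : ℝ) ≤ 2304 * D + 90 * √(#Y * D) := by
    refine card_le_of_no_comb (A := S) (fun b hb ↦ (Finset.mem_filter.1 hb).2.2)
      (fun a ha ↦ (Finset.card_le_card (nbrsIn_mono (Finset.filter_subset _ _) a)).trans
        (hdeg a (hSY ha))) fun T hT ↦ ?_
    exact hY.exists_card_privateNbrs_mul_sq_lt hG ⟨v, hv⟩ (Finset.filter_subset _ _)
      (fun b hb ↦ (Finset.mem_filter.1 hb).2.1) (fun a ha ↦ (mem_nbrsIn.1 (hSN (hT ha))).2)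
      fun a ha a' ha' h ↦ ((compl_adj _ _ _).1 (hS (hT ha) (hT ha') h.ne)).2 h
  have hcover' : (#Y : ℝ) ≤ #U + #B + #N + 1 := mod_cast hcover
  have hND : (#N : ℝ) ≤ D := mod_cast hdeg v hv
  linarith

lemma linear_add_sqrt_lt_rpow {x : ℝ} (hx : 0 < x) (hx' : x ≤ 1 / 10 ^ 8) :
    2306 * x + 90 * √x < x ^ (28⁻¹ : ℝ) := by
  set r : ℝ := x ^ (4⁻¹ : ℝ) with hr
  have hr0 : 0 < r := Real.rpow_pos_of_pos hx _
  have hr4 : r ^ 4 = x := Real.rpow_inv_natCast_pow hx.le four_ne_zero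
  have hsqrt : √x = r ^ 2 := by
    rw [← hr4, show r ^ 4 = (r ^ 2) ^ 2 by ring, Real.sqrt_sq (sq_nonneg r)]
  have hr_le : r ≤ 1 / 100 := le_of_pow_le_pow_left₀ four_ne_zero (by norm_num) (by
    rw [hr4]; linarith)
  have hr2 : r ^ 2 ≤ 1 / 100 * r := by nlinarith
  have hr4' : r ^ 4 ≤ (1 / 100) ^ 3 * r := by
    rw [pow_succ]
    gcongr
  calc 2306 * x + 90 * √x = 2306 * r ^ 4 + 90 * r ^ 2 := by rw [hr4, hsqrt]
    _ < r := by linarith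
    _ ≤ x ^ (28⁻¹ : ℝ) := Real.rpow_le_rpow_of_exponent_ge hx (hx'.trans (by norm_num))
        (by norm_num)

lemma IsKappaCritical.not_sparseTo (hY : IsKappaCritical G 28⁻¹ Y)
    (hG : ¬ Nonempty (starExpansion (pathGraph 4) ↪g G)) (hcard : 2 ≤ #Y) :
    ¬ SparseTo G (1 / 10 ^ 8) Y Y := by
  intro hsparse
  obtain ⟨u, hu, w, hw, huw⟩ := hY.exists_adj (by norm_num) hcard
  obtain ⟨v, hv, hmax⟩ := Y.exists_max_image (fun v ↦ #(nbrsIn G Y v)) ⟨u, hu⟩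
  set n := (#Y : ℝ)
  set D := (#(nbrsIn G Y v) : ℝ)
  have hn : 0 < n := Nat.cast_pos.2 (by omega)
  have hD : 1 ≤ D := Nat.one_le_cast.2
    ((Finset.one_le_card.2 ⟨w, mem_nbrsIn.2 ⟨hw, huw⟩⟩).trans (hmax u hu))
  have hle : n * (D / n) ^ (28⁻¹ : ℝ) ≤ 2305 * D + 90 * √(n * D) + 1 :=
    hY.card_mul_rpow_le hG hv hmax
  have hlt : 2306 * (D / n) + 90 * √(D / n) < (D / n) ^ (28⁻¹ : ℝ) :=
    linear_add_sqrt_lt_rpow (by positivity) ((div_le_iff₀ hn).2 (hsparse v hv))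
  have hsqrt : √(n * D) = n * √(D / n) := by
    rw [show n * D = n ^ 2 * (D / n) by field_simp, Real.sqrt_mul (by positivity),
      Real.sqrt_sq hn.le]
  have hDn : n * (D / n) = D := mul_div_cancel₀ D hn.ne'
  have := mul_lt_mul_of_pos_left hlt hn
  linarith

end Critical

section Rodl

variable {V : Type*} {G : SimpleGraph V} {A B C X Y : Finset V} {ε η : ℝ} {p s : ℕ}

lemma exists_subset_sparseTo_of_forall_exists {ι : Type*} [Fintype ι] (hX : X.Nonempty)
    (K : ι → SimpleGraph V) (f : ι → Finset V)
    (h : ∀ v ∈ X, ∃ j, (#(nbrsIn (K j) (f j) v) : ℝ) ≤ ε * #(f j)) :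
    ∃ j, ∃ A ⊆ X, (#X : ℝ) / Fintype.card ι ≤ #A ∧ SparseTo (K j) ε A (f j) := by
  classical
  obtain ⟨v, hv⟩ := hX
  have : Nonempty ι := ⟨(h v hv).choose⟩
  choose! g hg using h
  obtain ⟨j, -, hj⟩ := Finset.exists_le_card_fiber_of_nsmul_le_card_of_maps_to
    (s := X) (t := Finset.univ) (f := g) (b := (#X / Fintype.card ι : ℝ))
    (fun _ _ ↦ Finset.mem_univ _) Finset.univ_nonempty (by
      rw [Finset.card_univ, nsmul_eq_mul, mul_div_cancel₀ _ (by simp)])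
  refine ⟨j, {v ∈ X | g v = j}, Finset.filter_subset _ _, hj, fun v hv ↦ ?_⟩
  obtain ⟨hvX, rfl⟩ := Finset.mem_filter.1 hv
  exact hg v hvX

lemma adj_cons_iff_adj {h : ℕ} {H : SimpleGraph (Fin (h + 1))} {v : V} {φ : Fin h → V}
    (hv : ∀ j, G.Adj v (φ j) ↔ H.Adj 0 j.succ)
    (hφ : ∀ i j, i ≠ j → (G.Adj (φ i) (φ j) ↔ H.Adj i.succ j.succ)) (i j : Fin (h + 1))
    (hij : i ≠ j) :
    G.Adj (Fin.cons (α := fun _ ↦ V) v φ i) (Fin.cons (α := fun _ ↦ V) v φ j) ↔ H.Adj i j := by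
  cases i using Fin.cases <;> cases j using Fin.cases
  · exact absurd rfl hij
  · exact hv _
  · rw [G.adj_comm, H.adj_comm]
    exact hv _
  · exact hφ _ _ (ne_of_apply_ne Fin.succ hij)

lemma exists_pattern_or_sparseTo (hε : 0 < ε) (h : ℕ) :
    ∃ c : ℝ, 0 < c ∧ ∀ (V : Type u) (G : SimpleGraph V) (H : SimpleGraph (Fin h))
      (f : Fin h → Finset V) (m : ℝ), 0 < m → (∀ i, m ≤ #(f i)) →
      (∃ φ : Fin h → V, (∀ i, φ i ∈ f i) ∧ ∀ i j, i ≠ j → (G.Adj (φ i) (φ j) ↔ H.Adj i j)) ∨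
      ∃ i j, i ≠ j ∧ ∃ A ⊆ f i, ∃ B ⊆ f j, c * m ≤ #A ∧ c * m ≤ #B ∧
        (SparseTo G ε A B ∨ SparseTo Gᶜ ε A B) := by
  classical
  induction h with
  | zero => exact ⟨1, one_pos, fun V G H f m _ _ ↦ .inl ⟨nofun, nofun, nofun⟩⟩
  | succ h ih =>
    obtain ⟨c, hc, ih⟩ := ih
    refine ⟨min (c * ε) (1 / (h + 1)), by positivity, fun V G H f m hm hf ↦ ?_⟩
    have hcm : min (c * ε) (1 / (h + 1)) * m ≤ c * (ε * m) := by
      rw [← mul_assoc]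
      exact mul_le_mul_of_nonneg_right (min_le_left _ _) hm.le
    have hhm : min (c * ε) (1 / (h + 1)) * m ≤ m / (h + 1) :=
      (mul_le_mul_of_nonneg_right (min_le_right _ _) hm.le).trans_eq (one_div_mul_eq_div _ _)
    let K : Fin h → SimpleGraph V := fun j ↦ if H.Adj 0 j.succ then G else Gᶜ
    have hK : ∀ {v w j}, (K j).Adj v w → (G.Adj v w ↔ H.Adj 0 j.succ) := fun {v w j} hvw ↦ by
      by_cases hj : H.Adj 0 j.succ <;> simp_all [K]
    by_cases hv : ∃ v ∈ f 0, ∀ j, ε * #(f j.succ) ≤ #(nbrsIn (K j) (f j.succ) v)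
    · obtain ⟨v, hv0, hv⟩ := hv
      obtain ⟨φ, hφ, hφH⟩ | ⟨i, j, hij, A, hA, B, hB, hAc, hBc, hAB⟩ :=
        ih V G (H.comap Fin.succ) (fun j ↦ nbrsIn (K j) (f j.succ) v) (ε * m) (by positivity)
          fun j ↦ (mul_le_mul_of_nonneg_left (hf j.succ) hε.le).trans (hv j)
      · have hvφ : ∀ j, G.Adj v (φ j) ↔ H.Adj 0 j.succ := fun j ↦ hK (mem_nbrsIn.1 (hφ j)).2
        exact .inl ⟨Fin.cons v φ, Fin.cases hv0 fun j ↦ (mem_nbrsIn.1 (hφ j)).1,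
          adj_cons_iff_adj hvφ hφH⟩
      · exact .inr ⟨i.succ, j.succ, (Fin.succ_injective h).ne hij, A,
          hA.trans (nbrsIn_subset _ _ _), B, hB.trans (nbrsIn_subset _ _ _), hcm.trans hAc,
          hcm.trans hBc, hAB⟩
    · push Not at hv
      obtain ⟨j, A, hA, hAcard, hsparse⟩ := exists_subset_sparseTo_of_forall_exists
        (Finset.card_pos.1 (Nat.cast_pos.1 (hm.trans_le (hf 0)))) K (fun j ↦ f j.succ)
        fun v hv0 ↦ (hv v hv0).imp fun j hj ↦ hj.le
      rw [Fintype.card_fin] at hAcard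
      have hh : (0 : ℝ) < h := mod_cast j.pos
      refine .inr ⟨0, j.succ, (Fin.succ_ne_zero j).symm, A, hA, f j.succ, subset_rfl,
        hhm.trans (le_trans ?_ hAcard), hhm.trans ((div_le_self hm.le ?_).trans (hf _)), ?_⟩
      · exact div_le_div₀ (by positivity) (hf 0) hh (by linarith)
      · linarith
      · by_cases hj : H.Adj 0 j.succ
        · exact .inl (by simpa only [K, if_pos hj] using hsparse)
        · exact .inr (by simpa only [K, if_neg hj] using hsparse)

lemma exists_pairwise_disjoint_subsets {h : ℕ} (X : Finset V) (hX : h ≤ #X) :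
    ∃ f : Fin h → Finset V, (∀ i, f i ⊆ X) ∧ (∀ i j, i ≠ j → Disjoint (f i) (f j)) ∧
      ∀ i, #X ≤ 2 * h * #(f i) := by
  classical
  obtain rfl | hh := h.eq_zero_or_pos
  · exact ⟨nofun, nofun, nofun, nofun⟩
  obtain ⟨P, hP, hPcard⟩ := Finpartition.exists_equipartition_card_eq X hh.ne' hX
  obtain ⟨e⟩ : Nonempty (P.parts ≃ Fin h) := ⟨P.parts.equivFinOfCardEq hPcard⟩
  refine ⟨fun i ↦ e.symm i, fun i ↦ P.le (e.symm i).2, fun i j hij ↦ ?_, fun i ↦ ?_⟩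
  · exact P.disjoint (e.symm i).2 (e.symm j).2 fun h ↦ hij (e.symm.injective (Subtype.ext h))
  · have hle := hP.average_le_card_part (e.symm i).2
    rw [hPcard] at hle
    have hlt : #X < h * (#X / h + 1) := Nat.lt_mul_div_succ _ hh
    have hpos : 1 ≤ #X / h := (Nat.one_le_div_iff hh).2 hX
    nlinarith

lemma exists_sparseTo_of_embedding_free {h : ℕ} (H : SimpleGraph (Fin h)) (hε : 0 < ε) :
    ∃ c : ℝ, 0 < c ∧ ∀ (V : Type u) (G : SimpleGraph V), ¬ Nonempty (H ↪g G) →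
      ∀ X : Finset V, 1 ≤ c * #X → ∃ A ⊆ X, ∃ B ⊆ X, Disjoint A B ∧ 2 * #A ≤ #B ∧
        c * #X ≤ #A ∧ (SparseTo G ε A B ∨ SparseTo Gᶜ ε A B) := by
  obtain ⟨c, hc, hpattern⟩ := exists_pattern_or_sparseTo.{u} hε h
  refine ⟨min (c / (8 * (h + 1))) (1 / (h + 1)), by positivity, fun V G hG X hX ↦ ?_⟩
  set c' := min (c / (8 * (h + 1))) (1 / (h + 1))
  set m : ℝ := #X / (2 * (h + 1))
  have hcm : 4 * (c' * #X) ≤ c * m := calc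
    4 * (c' * #X) ≤ 4 * (c / (8 * (h + 1)) * #X) := by gcongr; exact min_le_left _ _
    _ = c * m := by simp only [m]; field_simp; ring
  have hhX : (h : ℝ) + 1 ≤ #X := by
    have := hX.trans (mul_le_mul_of_nonneg_right (min_le_right _ _) (Nat.cast_nonneg _))
    rwa [one_div_mul_eq_div, one_le_div (by positivity)] at this
  obtain ⟨f, hfX, hdisj, hf⟩ := exists_pairwise_disjoint_subsets (h := h) X
    (Nat.cast_le.1 ((le_add_of_nonneg_right zero_le_one).trans hhX))
  have hfm : ∀ i, m ≤ #(f i) := fun i ↦ by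
    rw [div_le_iff₀ (by positivity)]
    have : (#X : ℝ) ≤ 2 * h * #(f i) := mod_cast hf i
    linarith [Nat.cast_nonneg (α := ℝ) #(f i)]
  obtain ⟨φ, hφ, hφH⟩ | ⟨i, j, hij, A, hA, B, hB, hAm, hBm, hAB⟩ := hpattern V G H f m
    (div_pos (by linarith) (by positivity)) hfm
  · have hinj : Function.Injective φ := fun i j hφij ↦ by_contra fun hij ↦
      Finset.disjoint_left.1 (hdisj i j hij) (hφ i) (hφij ▸ hφ j)
    refine absurd ⟨⟨⟨φ, hinj⟩, fun {i j} ↦ ?_⟩⟩ hG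
    obtain rfl | hij := eq_or_ne i j
    · simp
    · exact hφH i j hij
  · obtain ⟨A', hA', hA'card⟩ := Finset.exists_subset_card_eq (min_le_left #A (#B / 2))
    refine ⟨A', hA'.trans (hA.trans (hfX i)), B, hB.trans (hfX j),
      (hdisj i j hij).mono (hA'.trans hA) hB, by omega, ?_,
      hAB.imp (fun h a ha ↦ h a (hA' ha)) fun h a ha ↦ h a (hA' ha)⟩
    have hhalf : (#B : ℝ) ≤ 2 * (#B / 2 : ℕ) + 1 := mod_cast (by omega : #B ≤ 2 * (#B / 2) + 1)
    rw [hA'card, Nat.cast_min]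
    exact le_min (by linarith) (by linarith)

lemma card_le_two_mul_card_filter_le {ι : Type*} (S : Finset ι) {f : ι → ℝ} {t : ℝ}
    (hf : ∀ i ∈ S, 0 ≤ f i) (hsum : ∑ i ∈ S, f i ≤ t * #S) : #S ≤ 2 * #{i ∈ S | f i ≤ 2 * t} := by
  by_contra! hlt
  have hsplit := S.card_filter_add_card_filter_not (f · ≤ 2 * t)
  have hS : (0 : ℝ) < #S := mod_cast (by omega : 0 < #S)
  have ht : 0 ≤ t := nonneg_of_mul_nonneg_left ((Finset.sum_nonneg hf).trans hsum) hS
  refine hsum.not_gt ?_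
  calc t * #S ≤ t * (2 * #{i ∈ S | ¬ f i ≤ 2 * t}) :=
        mul_le_mul_of_nonneg_left (mod_cast (by omega)) ht
    _ = ∑ i ∈ S with ¬ f i ≤ 2 * t, 2 * t := by rw [Finset.sum_const, nsmul_eq_mul]; ring
    _ < ∑ i ∈ S with ¬ f i ≤ 2 * t, f i := Finset.sum_lt_sum_of_nonempty
        (Finset.card_pos.1 (by omega)) fun i hi ↦ not_le.1 (Finset.mem_filter.1 hi).2
    _ ≤ ∑ i ∈ S, f i := Finset.sum_le_sum_of_subset_of_nonneg (Finset.filter_subset _ _)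
        fun i hi _ ↦ hf i hi

lemma sum_card_nbrsIn_comm (G : SimpleGraph V) (X Y : Finset V) :
    ∑ x ∈ X, #(nbrsIn G Y x) = ∑ y ∈ Y, #(nbrsIn G X y) := by
  classical
  refine (Finset.sum_card_bipartiteAbove_eq_sum_card_bipartiteBelow G.Adj).trans ?_
  exact Finset.sum_congr rfl fun y _ ↦ by simp only [Finset.bipartiteBelow, nbrsIn, G.adj_comm]

lemma sum_card_nbrsIn_union_le [DecidableEq V] (G : SimpleGraph V) (X C : Finset V) :
    ∑ y ∈ X ∪ C, #(nbrsIn G (X ∪ C) y) ≤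
      ∑ x ∈ X, #(nbrsIn G X x) + 2 * ∑ y ∈ C, #(nbrsIn G X y) + #C ^ 2 := by
  have hunion : ∀ y, #(nbrsIn G (X ∪ C) y) ≤ #(nbrsIn G X y) + #(nbrsIn G C y) := fun y ↦ by
    rw [nbrsIn, Finset.filter_union]
    exact Finset.card_union_le _ _
  calc ∑ y ∈ X ∪ C, #(nbrsIn G (X ∪ C) y)
      ≤ ∑ y ∈ X ∪ C, #(nbrsIn G (X ∪ C) y) + ∑ y ∈ X ∩ C, #(nbrsIn G (X ∪ C) y) := le_self_add
    _ = ∑ x ∈ X, #(nbrsIn G (X ∪ C) x) + ∑ y ∈ C, #(nbrsIn G (X ∪ C) y) :=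
        Finset.sum_union_inter
    _ ≤ ∑ x ∈ X, (#(nbrsIn G X x) + #(nbrsIn G C x)) + ∑ y ∈ C, (#(nbrsIn G X y) + #C) := by
        gcongr with x _ y _
        · exact hunion x
        · exact (hunion y).trans (Nat.add_le_add_left (Finset.card_le_card (nbrsIn_subset _ _ _)) _)
    _ = ∑ x ∈ X, #(nbrsIn G X x) + 2 * ∑ y ∈ C, #(nbrsIn G X y) + #C ^ 2 := by
        rw [Finset.sum_add_distrib, Finset.sum_add_distrib, sum_card_nbrsIn_comm G X C,
          Finset.sum_const, smul_eq_mul]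
        ring

/-- `A` contains a set `X` of `p * s` vertices, to be thought of as a union of `p` blocks of size
`s`, with few edges between distinct blocks. Only the total number of edges is recorded: the term
`p * s ^ 2` accounts for the edges inside the blocks. -/
def HasSparseBlocks (G : SimpleGraph V) (ε : ℝ) (p s : ℕ) (A : Finset V) : Prop :=
  ∃ X ⊆ A, #X = p * s ∧ ∑ x ∈ X, (#(nbrsIn G X x) : ℝ) ≤ (p + 2 * p ^ 2 * ε) * s ^ 2

lemma hasSparseBlocks_zero : HasSparseBlocks G ε 0 s A :=
  ⟨∅, by simp⟩

lemma HasSparseBlocks.mono (h : HasSparseBlocks G ε p s A) (hA : A ⊆ B) :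
    HasSparseBlocks G ε p s B :=
  let ⟨X, hX, h⟩ := h
  ⟨X, hX.trans hA, h⟩

lemma HasSparseBlocks.succ (h : HasSparseBlocks G ε p s A) (hε : 0 ≤ ε) (hAB : Disjoint A B)
    (hsparse : SparseTo G ε A B) (hs : 2 * s ≤ #B) (hA : A ⊆ C) (hB : B ⊆ C) :
    HasSparseBlocks G ε (p + 1) s C := by
  classical
  obtain ⟨X, hXA, hX, hdeg⟩ := h
  have hXB : ∑ b ∈ B, (#(nbrsIn G X b) : ℝ) ≤ ε * #X * #B := by
    rw [← Nat.cast_sum, ← sum_card_nbrsIn_comm, Nat.cast_sum, mul_right_comm, mul_comm,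
      ← nsmul_eq_mul]
    exact Finset.sum_le_card_nsmul _ _ _ fun x hx ↦ hsparse x (hXA hx)
  have hfew := card_le_two_mul_card_filter_le B (fun _ _ ↦ Nat.cast_nonneg _) hXB
  obtain ⟨D, hD, hDs⟩ := Finset.exists_subset_card_eq
    (show s ≤ #{b ∈ B | (#(nbrsIn G X b) : ℝ) ≤ 2 * (ε * #X)} by omega)
  have hDB : D ⊆ B := hD.trans (Finset.filter_subset _ _)
  have hXD : ∑ y ∈ D, (#(nbrsIn G X y) : ℝ) ≤ s * (2 * (ε * (p * s))) := by
    rw [← hDs, ← nsmul_eq_mul]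
    refine Finset.sum_le_card_nsmul _ _ _ fun y hy ↦ ?_
    simpa [hX, hDs] using (Finset.mem_filter.1 (hD hy)).2
  refine ⟨X ∪ D, Finset.union_subset (hXA.trans hA) (hDB.trans hB), ?_, ?_⟩
  · rw [Finset.card_union_of_disjoint (hAB.mono hXA hDB), hX, hDs, add_one_mul]
  · have hunion : ∑ y ∈ X ∪ D, (#(nbrsIn G (X ∪ D) y) : ℝ) ≤
        ∑ x ∈ X, (#(nbrsIn G X x) : ℝ) + 2 * ∑ y ∈ D, (#(nbrsIn G X y) : ℝ) + s ^ 2 :=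
      mod_cast hDs ▸ sum_card_nbrsIn_union_le G X D
    push_cast
    linarith [mul_nonneg hε (sq_nonneg (s : ℝ))]

lemma exists_hasSparseBlocks {h : ℕ} (H : SimpleGraph (Fin h)) (hε : 0 < ε) (p q : ℕ) :
    ∃ δ : ℝ, 0 < δ ∧ ∀ (V : Type u) (G : SimpleGraph V), ¬ Nonempty (H ↪g G) →
      ∀ A : Finset V, 1 ≤ δ * #A → ∃ s : ℕ, δ * #A ≤ s ∧ s ≤ #A ∧
        (HasSparseBlocks G ε p s A ∨ HasSparseBlocks Gᶜ ε q s A) := by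
  induction p generalizing q with
  | zero =>
    exact ⟨1, one_pos, fun V G _ A _ ↦ ⟨#A, by simp, le_rfl, .inl hasSparseBlocks_zero⟩⟩
  | succ p ihp =>
  induction q with
  | zero =>
    exact ⟨1, one_pos, fun V G _ A _ ↦ ⟨#A, by simp, le_rfl, .inr hasSparseBlocks_zero⟩⟩
  | succ q ihq =>
  obtain ⟨δ₁, hδ₁, ihp⟩ := ihp (q + 1)
  obtain ⟨δ₂, hδ₂, ihq⟩ := ihq
  obtain ⟨c, hc, hpair⟩ := exists_sparseTo_of_embedding_free.{u} H hε
  refine ⟨c * min 1 (min δ₁ δ₂), by positivity, fun V G hG A hA ↦ ?_⟩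
  obtain ⟨X, hXA, B, hBA, hXB, hcard, hXcard, hsparse⟩ := hpair V G hG A (hA.trans (by
    gcongr
    exact mul_le_of_le_one_right hc.le (min_le_left _ _)))
  have hle : ∀ {δ'}, min 1 (min δ₁ δ₂) ≤ δ' → c * min 1 (min δ₁ δ₂) * #A ≤ δ' * #X :=
    fun {δ'} hδ' ↦ by
      rw [mul_right_comm, mul_comm]
      exact mul_le_mul hδ' hXcard (by positivity) (le_trans (by positivity) hδ')
  have hXA' := Finset.card_le_card hXA
  obtain hsparse | hsparse := hsparse
  · have hδ := hle ((min_le_right _ _).trans (min_le_left _ _))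
    obtain ⟨s, hs, hsX, hblocks⟩ := ihp V G hG X (hA.trans hδ)
    exact ⟨s, hδ.trans hs, hsX.trans hXA', hblocks.imp
      (·.succ hε.le hXB hsparse (by omega) hXA hBA) (·.mono hXA)⟩
  · have hδ := hle ((min_le_right _ _).trans (min_le_right _ _))
    obtain ⟨s, hs, hsX, hblocks⟩ := ihq V G hG X (hA.trans hδ)
    exact ⟨s, hδ.trans hs, hsX.trans hXA', hblocks.imp
      (·.mono hXA) (·.succ hε.le hXB hsparse (by omega) hXA hBA)⟩

lemma HasSparseBlocks.exists_sparseTo (h : HasSparseBlocks G (1 / (2 * p)) p s A) (hη : 0 ≤ η)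
    (hp : 2 ≤ p) (hpη : 8 ≤ η * p) : ∃ Y ⊆ A, s ≤ #Y ∧ SparseTo G η Y Y := by
  obtain ⟨X, hXA, hX, hdeg⟩ := h
  have hp0 : (0 : ℝ) < p := mod_cast (by omega : 0 < p)
  have hXps : (#X : ℝ) = p * s := mod_cast hX
  have hsum : ∑ x ∈ X, (#(nbrsIn G X x) : ℝ) ≤ η / 4 * #X * #X := calc
    ∑ x ∈ X, (#(nbrsIn G X x) : ℝ) ≤ 8 / 4 * p * s ^ 2 := hdeg.trans_eq (by field_simp; ring)
    _ ≤ η * p / 4 * p * s ^ 2 := by gcongr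
    _ = η / 4 * #X * #X := by rw [hXps]; ring
  have hY := card_le_two_mul_card_filter_le X (fun _ _ ↦ Nat.cast_nonneg _) hsum
  set Y := {x ∈ X | (#(nbrsIn G X x) : ℝ) ≤ 2 * (η / 4 * #X)}
  have hYX : Y ⊆ X := Finset.filter_subset _ _
  refine ⟨Y, hYX.trans hXA, ?_, fun y hy ↦ ?_⟩
  · have := Nat.mul_le_mul_right s hp
    omega
  · calc (#(nbrsIn G Y y) : ℝ) ≤ #(nbrsIn G X y) :=
          mod_cast Finset.card_le_card (nbrsIn_mono hYX y)
      _ ≤ η / 2 * #X := (Finset.mem_filter.1 hy).2.trans_eq (by ring)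
      _ ≤ η / 2 * (2 * #Y) := by gcongr; exact_mod_cast hY
      _ = η * #Y := by ring

/-- Rödl's theorem. -/
lemma exists_sparseTo_self_of_embedding_free {h : ℕ} (H : SimpleGraph (Fin h)) (hη : 0 < η) :
    ∃ δ : ℝ, 0 < δ ∧ ∀ (V : Type u) (G : SimpleGraph V), ¬ Nonempty (H ↪g G) →
      ∀ A : Finset V, 1 ≤ δ * #A → ∃ X ⊆ A, δ * #A ≤ #X ∧
        (SparseTo G η X X ∨ SparseTo Gᶜ η X X) := by
  obtain ⟨p, hp⟩ := exists_nat_ge (max 2 (8 / η))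
  have hp2 : 2 ≤ p := Nat.ofNat_le_cast.1 ((le_max_left _ _).trans hp)
  have hpη : 8 ≤ η * p := (div_le_iff₀' hη).1 ((le_max_right _ _).trans hp)
  obtain ⟨δ, hδ, hblocks⟩ := exists_hasSparseBlocks.{u} H (ε := 1 / (2 * p)) (by positivity) p p
  refine ⟨δ, hδ, fun V G hG A hA ↦ ?_⟩
  obtain ⟨s, hs, -, hsparse | hsparse⟩ := hblocks V G hG A hA
  · obtain ⟨X, hXA, hsX, hX⟩ := hsparse.exists_sparseTo hη.le hp2 hpη
    exact ⟨X, hXA, hs.trans (mod_cast hsX), .inl hX⟩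
  · obtain ⟨X, hXA, hsX, hX⟩ := hsparse.exists_sparseTo hη.le hp2 hpη
    exact ⟨X, hXA, hs.trans (mod_cast hsX), .inr hX⟩

lemma SparseTo.of_card_le_two_mul (h : SparseTo G η X X) (hη : 0 ≤ η) (hYX : Y ⊆ X)
    (hcard : #X ≤ 2 * #Y) : SparseTo G (2 * η) Y Y := fun y hy ↦ calc
  (#(nbrsIn G Y y) : ℝ) ≤ #(nbrsIn G X y) := mod_cast Finset.card_le_card (nbrsIn_mono hYX y)
  _ ≤ η * #X := h y (hYX hy)
  _ ≤ η * (2 * #Y) := by gcongr; exact_mod_cast hcard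
  _ = 2 * η * #Y := by ring

end Rodl

section ErdosHajnal

variable {V : Type*} {G : SimpleGraph V} {A X Y : Finset V} {δ τ : ℝ} {M : ℕ}

lemma IsKappaCritical.card_lt_two_mul_card (hA : IsKappaCritical G τ A) (hτ : 0 < τ)
    (hXA : X ⊆ A) (hX : δ * #A ≤ #X) (hδ : (1 / 2) ^ M < δ) (hYX : Y ⊆ X) (hYne : Y.Nonempty)
    (hY : (kappaNum (G.induce Y) : ℝ) / #Y ^ ((M + 1) * τ) ≤
      kappaNum (G.induce X) / #X ^ ((M + 1) * τ)) : #X < 2 * #Y := by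
  have hXne := hYne.mono hYX
  have hX0 : (0 : ℝ) < #X := mod_cast hXne.card_pos
  have hA0 : (0 : ℝ) < #A := mod_cast (hXne.mono hXA).card_pos
  have hY0 : (0 : ℝ) < #Y := mod_cast hYne.card_pos
  have hκ : (0 : ℝ) < kappaNum (G.induce A) := mod_cast kappaNum_induce_pos (hXne.mono hXA)
  have hδ0 : 0 < δ := hδ.trans' (by positivity)
  set y : ℝ := #Y / #X
  have hy : 0 < y := by positivity
  have hδy : δ * y ≤ #Y / #A := by
    rw [mul_div_left_comm, ← mul_one_div (#Y : ℝ)]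
    refine mul_le_mul_of_nonneg_left ?_ hY0.le
    rwa [div_le_div_iff₀ hX0 hA0, one_mul]
  have hpow : (δ * y) ^ τ ≤ (y ^ M * y) ^ τ := by
    refine le_of_mul_le_mul_left ?_ hκ
    calc (kappaNum (G.induce A) : ℝ) * (δ * y) ^ τ
        ≤ kappaNum (G.induce A) * (#Y / #A) ^ τ := by gcongr
      _ ≤ kappaNum (G.induce Y) := hA Y (hYX.trans hXA)
      _ ≤ kappaNum (G.induce X) * y ^ ((M + 1) * τ) := by
          rwa [div_le_iff₀ (by positivity), div_mul_eq_mul_div, mul_div_assoc,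
            ← Real.div_rpow hY0.le hX0.le] at hY
      _ ≤ kappaNum (G.induce A) * y ^ ((M + 1) * τ) := by gcongr; exact kappaNum_induce_mono hXA
      _ = kappaNum (G.induce A) * (y ^ M * y) ^ τ := by
          rw [← pow_succ, ← Real.rpow_natCast, ← Real.rpow_mul hy.le, Nat.cast_succ]
  have hδ_le : δ ≤ y ^ M := le_of_mul_le_mul_right
    ((Real.rpow_le_rpow_iff (by positivity) (by positivity) hτ).1 hpow) hy
  have hhalf : 1 / 2 < y := lt_of_pow_lt_pow_left₀ M hy.le (hδ.trans_le hδ_le)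
  rw [div_lt_div_iff₀ two_pos hX0, one_mul, mul_comm] at hhalf
  exact_mod_cast hhalf

lemma exists_card_lt_two_pow_of_isKappaCritical :
    ∃ M : ℕ, ∀ (V : Type u) (G : SimpleGraph V),
      ¬ Nonempty (starExpansion (pathGraph 4) ↪g G) →
      ¬ Nonempty ((starExpansion (pathGraph 4))ᶜ ↪g G) →
      ∀ A : Finset V, IsKappaCritical G (28⁻¹ / (M + 1)) A → #A < 2 ^ M := by
  obtain ⟨δ, hδ, hrodl⟩ := exists_sparseTo_self_of_embedding_free.{u}
    ((starExpansion (pathGraph 4)).overFin rfl) (η := 1 / 10 ^ 8 / 2) (by norm_num)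
  obtain ⟨M, hM⟩ := exists_pow_lt_of_lt_one (show 0 < δ / 4 by positivity)
    (one_half_lt_one (α := ℝ))
  refine ⟨M, fun V G hG hG' A hA ↦ lt_of_not_ge fun hcard ↦ ?_⟩
  have hδA : 4 ≤ δ * #A := by
    have hcard' : (2 : ℝ) ^ M ≤ #A := mod_cast hcard
    rw [one_div, inv_pow, inv_lt_iff_one_lt_mul₀ (by positivity)] at hM
    linarith [mul_le_mul_of_nonneg_left hcard' hδ.le]
  obtain ⟨X, hXA, hX, hsparse⟩ := hrodl V G
    (fun ⟨e⟩ ↦ hG ⟨e.comp ((starExpansion (pathGraph 4)).overFinIso rfl).toEmbedding⟩) A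
    (by linarith)
  have hX4 : 4 ≤ #X := Nat.ofNat_le_cast.1 (hδA.trans hX)
  obtain ⟨Y, hYX, hYne, hY, hYκ⟩ := exists_isKappaCritical_subset G (σ := 28⁻¹) (by norm_num)
    (Finset.card_pos.1 (by omega) : X.Nonempty)
  have hXY : #X < 2 * #Y := by
    refine hA.card_lt_two_mul_card (by positivity) hXA hX (hM.trans (by linarith)) hYX hYne ?_
    rwa [mul_div_cancel₀ _ (by positivity)]
  have hY2 : 2 ≤ #Y := by omega
  have hsparseY : ∀ G' : SimpleGraph V, SparseTo G' (1 / 10 ^ 8 / 2) X X →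
      SparseTo G' (1 / 10 ^ 8) Y Y := fun G' h ↦ by
    simpa only [mul_div_cancel₀ _ (two_ne_zero' ℝ)] using
      h.of_card_le_two_mul (by positivity) hYX hXY.le
  obtain hsparse | hsparse := hsparse
  · exact hY.not_sparseTo hG hY2 (hsparseY G hsparse)
  · refine hY.compl.not_sparseTo (fun ⟨e⟩ ↦ hG' ⟨?_⟩) hY2 (hsparseY Gᶜ hsparse)
    simpa only [compl_compl] using Embedding.complEquiv e

lemma rpow_card_le_kappaNum_induce_of_card_le_two_pow (hA : A.Nonempty) (hcard : #A ≤ 2 ^ M)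
    (hτ : 0 ≤ τ) (hMτ : M * τ ≤ 1) : (#A : ℝ) ^ τ ≤ kappaNum (G.induce A) := by
  obtain hone | htwo := (Nat.one_le_iff_ne_zero.2 hA.card_ne_zero).eq_or_lt
  · rw [← hone, Nat.cast_one, Real.one_rpow]
    exact_mod_cast kappaNum_induce_pos hA
  calc (#A : ℝ) ^ τ ≤ ((2 : ℝ) ^ M) ^ τ := by gcongr; exact_mod_cast hcard
    _ = (2 : ℝ) ^ (M * τ) := by rw [← Real.rpow_natCast, ← Real.rpow_mul zero_le_two]
    _ ≤ 2 := Real.rpow_le_self_of_one_le one_le_two hMτ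
    _ ≤ kappaNum (G.induce A) := mod_cast two_le_kappaNum_induce htwo

lemma exists_rpow_card_le_kappaNum_induce :
    ∃ τ : ℝ, 0 < τ ∧ ∀ (V : Type u) (G : SimpleGraph V),
      ¬ Nonempty (starExpansion (pathGraph 4) ↪g G) →
      ¬ Nonempty ((starExpansion (pathGraph 4))ᶜ ↪g G) →
      ∀ A : Finset V, (#A : ℝ) ^ τ ≤ kappaNum (G.induce A) := by
  obtain ⟨M, hM⟩ := exists_card_lt_two_pow_of_isKappaCritical.{u}
  have hτ : (0 : ℝ) < 28⁻¹ / (M + 1) := by positivity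
  have hMτ : (M : ℝ) * (28⁻¹ / (M + 1)) ≤ 1 := by
    rw [mul_div_assoc', div_le_one (by positivity)]
    linarith [Nat.cast_nonneg (α := ℝ) M]
  refine ⟨28⁻¹ / (M + 1), hτ, fun V G hG hG' A ↦ ?_⟩
  obtain rfl | hA := A.eq_empty_or_nonempty
  · simp [Real.zero_rpow hτ.ne']
  obtain ⟨B, -, hBne, hB, hle⟩ := exists_isKappaCritical_subset G hτ hA
  have hA0 : (0 : ℝ) < #A := mod_cast hA.card_pos
  have hB0 : (0 : ℝ) < #B := mod_cast hBne.card_pos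
  rw [← one_le_div (by positivity)]
  refine le_trans ?_ hle
  rw [one_le_div (by positivity)]
  exact rpow_card_le_kappaNum_induce_of_card_le_two_pow hBne (hM V G hG hG' B hB).le hτ.le hMτ

lemma kappaNum_induce_le_max_sq [Finite V] (G : SimpleGraph V) (A : Finset V) :
    kappaNum (G.induce A) ≤ max (alphaNum G) (omegaNum G) ^ 2 := by
  have hω : ∀ G' : SimpleGraph V, omegaNum (G'.induce A) ≤ omegaNum G' := fun G' ↦ by
    obtain ⟨S, -, hS, hcard⟩ := exists_isClique_card_eq_omegaNum_induce G' A
    exact hcard ▸ hS.card_le_cliqueNum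
  rw [kappaNum, alphaNum_induce, sq]
  exact Nat.mul_le_mul ((hω Gᶜ).trans (le_max_left _ _)) ((hω G).trans (le_max_right _ _))

end ErdosHajnal

/-- For `H` the star-expansion of `P₄`, the set `{H, H̄}` has the Erdős–Hajnal property. -/
theorem stmt_13 :
    ∃ τ : ℝ, 0 < τ ∧
      ∀ (V : Type) [Fintype V] (G : SimpleGraph V),
        ¬ Nonempty (starExpansion (pathGraph 4) ↪g G) →
        ¬ Nonempty ((starExpansion (pathGraph 4))ᶜ ↪g G) →
        (Fintype.card V : ℝ) ^ τ ≤ ((max (alphaNum G) (omegaNum G) : ℕ) : ℝ) := by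
  obtain ⟨τ, hτ, hκ⟩ := exists_rpow_card_le_kappaNum_induce
  refine ⟨τ / 2, by positivity, fun V _ G hG hG' ↦ le_of_sq_le_sq ?_ (Nat.cast_nonneg _)⟩
  calc ((Fintype.card V : ℝ) ^ (τ / 2)) ^ 2 = (#(Finset.univ : Finset V) : ℝ) ^ τ := by
        rw [← Real.rpow_mul_natCast (Nat.cast_nonneg _), Nat.cast_two,
          div_mul_cancel₀ _ two_ne_zero, Finset.card_univ]
    _ ≤ kappaNum (G.induce (Finset.univ : Finset V)) := hκ V G hG hG' Finset.univ
    _ ≤ ((max (alphaNum G) (omegaNum G) : ℕ) : ℝ) ^ 2 :=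
        mod_cast kappaNum_induce_le_max_sq G Finset.univ
end

section
/- For every real ε > 0 and every graph H on h vertices, there exist reals γ, δ > 0 such that if G is a graph containing fewer than γ|G|^h induced labelled copies of H, then there exists X ⊆ V(G) with |X| ≥ δ|G| such that one of G[X], Ḡ[X] has maximum degree at most εδ|G|. -/
open SimpleGraph

/-!
Count the maps realising a prescribed pattern of edges and non-edges greedily, one vertex at a
time: if no two large subsets of `S` form a sparse pair in `G` or in its complement, then most
choices leave a positive fraction of the candidates for each later vertex, so `H` has many induced
copies. Hence, if copies are few, every large set contains a sparse pair `(A, B)` in `G` or in its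
complement.

Sparse pairs are then assembled as in Ramsey's theorem. By induction, `A` and a suitable part of `B`
each contain either a sparse union of `2 ^ (i - 1)` blocks in the graph in which `(A, B)` is sparse,
which join to one of `2 ^ i` blocks, or a sparse union of `2 ^ j` blocks in the other graph. The
result is a set made of `k` small blocks with few edges between them; a block contributes only its
size to the degrees, so the average degree is of order `1 / k` times the size of the set, and
deleting the vertices of large degree bounds the maximum degree.
-/

open Finset

section Averaging

variable {α ι : Type*}

lemma card_le_two_mul_card_filter_le_two_mul {s : Finset α} {f : α → ℝ} {D : ℝ}
    (hf : ∀ a ∈ s, 0 ≤ f a) (hD : 0 < D) (h : ∑ a ∈ s, f a ≤ D * #s) :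
    (#s : ℝ) ≤ 2 * #{a ∈ s | f a ≤ 2 * D} := by
  have hsplit : (#{a ∈ s | f a ≤ 2 * D} : ℝ) + #{a ∈ s | ¬ f a ≤ 2 * D} = #s := by
    exact_mod_cast card_filter_add_card_filter_not _
  have hmarkov : (#{a ∈ s | ¬ f a ≤ 2 * D} : ℝ) * (2 * D) ≤ D * #s := by
    calc (#{a ∈ s | ¬ f a ≤ 2 * D} : ℝ) * (2 * D)
        ≤ ∑ a ∈ s with ¬ f a ≤ 2 * D, f a := by
          rw [← nsmul_eq_mul]
          exact card_nsmul_le_sum _ _ _ fun a ha ↦ (not_le.1 (mem_filter.1 ha).2).le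
      _ ≤ ∑ a ∈ s, f a :=
          sum_le_sum_of_subset_of_nonneg (filter_subset _ _) fun a ha _ ↦ hf a ha
      _ ≤ D * #s := h
  nlinarith

lemma card_le_card_filter_forall_add_sum_card_filter_not [Fintype ι] (s : Finset α)
    (p : ι → α → Prop) [∀ i, DecidablePred (p i)]
    [DecidablePred fun a ↦ ∀ i, p i a] :
    #s ≤ #{a ∈ s | ∀ i, p i a} + ∑ i, #{a ∈ s | ¬ p i a} := by
  classical
  have hcover : s ⊆ {a ∈ s | ∀ i, p i a} ∪ univ.biUnion fun i ↦ {a ∈ s | ¬ p i a} := by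
    intro a ha
    simp only [mem_union, mem_filter, mem_biUnion, mem_univ, true_and, ha, ← not_forall]
    exact em _
  calc #s ≤ #{a ∈ s | ∀ i, p i a} + #(univ.biUnion fun i ↦ {a ∈ s | ¬ p i a}) :=
        (card_le_card hcover).trans (card_union_le _ _)
    _ ≤ _ := by gcongr; exact card_biUnion_le

end Averaging

section Interedges

variable {V : Type*} (G : SimpleGraph V) [DecidableRel G.Adj]

lemma card_interedges_eq_sum_card_filter_adj (A B : Finset V) :
    #(G.interedges A B) = ∑ v ∈ A, #{w ∈ B | G.Adj v w} := by
  simp only [interedges_def, card_filter, sum_product]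

lemma card_interedges_comm (A B : Finset V) : #(G.interedges A B) = #(G.interedges B A) :=
  have := G.symm
  Rel.card_interedges_comm A B

lemma card_interedges_union_self [DecidableEq V] {X Y : Finset V} (hXY : Disjoint X Y) :
    #(G.interedges (X ∪ Y) (X ∪ Y)) =
      #(G.interedges X X) + #(G.interedges Y Y) + 2 * #(G.interedges Y X) := by
  have hsplit (v : V) :
      #{w ∈ X ∪ Y | G.Adj v w} = #{w ∈ X | G.Adj v w} + #{w ∈ Y | G.Adj v w} := by
    rw [filter_union, card_union_of_disjoint (disjoint_filter_filter hXY)]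
  have hcomm := card_interedges_comm G X Y
  simp only [card_interedges_eq_sum_card_filter_adj, sum_union hXY, hsplit,
    sum_add_distrib] at hcomm ⊢
  lia

lemma card_interedges_self_le (X : Finset V) :
    (#(G.interedges X X) : ℝ) ≤ #X * (#X - 1) := by
  classical
  have hdiag : G.interedges X X ⊆ X.offDiag := fun e he ↦ by
    obtain ⟨h₁, h₂, hadj⟩ := (mem_interedges_iff G).1 he
    exact mem_offDiag.2 ⟨h₁, h₂, hadj.ne⟩
  have hcard := card_le_card hdiag
  rw [offDiag_card, ← Nat.mul_sub_one] at hcard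
  rcases X.eq_empty_or_nonempty with rfl | hX
  · simp
  · rw [← Nat.cast_pred hX.card_pos]
    exact_mod_cast hcard

end Interedges

section SparsePair

variable {V : Type*} {G : SimpleGraph V} [DecidableRel G.Adj] {ρ : ℝ} {A B : Finset V}

/-- A one-sided, everywhere version of low edge density between `A` and `B`: each vertex of `A`
is adjacent to at most a fraction `ρ` of `B`. The two sets may overlap. -/
def IsSparsePair (G : SimpleGraph V) [DecidableRel G.Adj] (ρ : ℝ) (A B : Finset V) : Prop :=
  ∀ v ∈ A, (#{w ∈ B | G.Adj v w} : ℝ) ≤ ρ * #B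

namespace IsSparsePair

lemma mono_left {A' : Finset V} (h : IsSparsePair G ρ A B) (hA : A' ⊆ A) :
    IsSparsePair G ρ A' B :=
  fun v hv ↦ h v (hA hv)

lemma card_interedges_le (h : IsSparsePair G ρ A B) :
    (#(G.interedges A B) : ℝ) ≤ #A * (ρ * #B) := by
  rw [card_interedges_eq_sum_card_filter_adj, Nat.cast_sum, ← nsmul_eq_mul]
  exact sum_le_card_nsmul _ _ _ h

lemma exists_disjoint_swap (h : IsSparsePair G ρ A B) (hρ : 0 < ρ)
    (hA : A.Nonempty) :
    ∃ B' ⊆ B, Disjoint A B' ∧ (#B : ℝ) ≤ 2 * (#B' + #A) ∧ IsSparsePair G (2 * ρ) B' A := by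
  classical
  set B₀ : Finset V := {w ∈ B | (#{v ∈ A | G.Adj w v} : ℝ) ≤ 2 * (ρ * #A)}
  have hApos : (0 : ℝ) < #A := by exact_mod_cast hA.card_pos
  have hB : (#B : ℝ) ≤ 2 * #B₀ := by
    refine card_le_two_mul_card_filter_le_two_mul (fun _ _ ↦ Nat.cast_nonneg _)
      (mul_pos hρ hApos) ?_
    calc ∑ w ∈ B, (#{v ∈ A | G.Adj w v} : ℝ) = #(G.interedges B A) := by
          rw [card_interedges_eq_sum_card_filter_adj, Nat.cast_sum]
      _ = #(G.interedges A B) := congrArg Nat.cast (card_interedges_comm G B A)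
      _ ≤ #A * (ρ * #B) := h.card_interedges_le
      _ = ρ * #A * #B := by ring
  have hsdiff : (#B₀ : ℝ) ≤ #(B₀ \ A) + #A := by
    exact_mod_cast tsub_le_iff_right.1 (le_card_sdiff A B₀)
  refine ⟨B₀ \ A, sdiff_subset.trans (filter_subset _ _), disjoint_sdiff, by linarith, ?_⟩
  intro w hw
  rw [mul_assoc]
  exact (mem_filter.1 (mem_sdiff.1 hw).1).2

end IsSparsePair

end SparsePair

section PatternCount

variable {V ι : Type*} (C : ι → SimpleGraph V) [∀ i, DecidableRel (C i).Adj] {h : ℕ}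

/-- The maps that send each `i` into `U i` and each pair `i < j` to an edge of the graph
`C (χ i j)`. Only the values of `χ` above the diagonal matter. -/
def patternMaps (χ : Fin h → Fin h → ι) (U : Fin h → Finset V) : Finset (Fin h → V) :=
  {f ∈ Fintype.piFinset U | ∀ i j, i < j → (C (χ i j)).Adj (f i) (f j)}

variable {C}

lemma mem_patternMaps {χ : Fin h → Fin h → ι} {U : Fin h → Finset V} {f : Fin h → V} :
    f ∈ patternMaps C χ U ↔
      (∀ i, f i ∈ U i) ∧ ∀ i j, i < j → (C (χ i j)).Adj (f i) (f j) := by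
  simp only [patternMaps, mem_filter, Fintype.mem_piFinset]

lemma cons_mem_patternMaps {χ : Fin (h + 1) → Fin (h + 1) → ι} {U : Fin (h + 1) → Finset V}
    {v : V} {f : Fin h → V} :
    (Fin.cons v f : Fin (h + 1) → V) ∈ patternMaps C χ U ↔
      v ∈ U 0 ∧ f ∈ patternMaps C (fun i j ↦ χ i.succ j.succ)
        fun i ↦ {w ∈ U i.succ | (C (χ 0 i.succ)).Adj v w} := by
  simp only [mem_patternMaps, Fin.forall_fin_succ, Fin.cons_zero, Fin.cons_succ, mem_filter,
    Fin.succ_lt_succ_iff, Fin.succ_pos, Fin.not_lt_zero, forall_and, true_imp_iff,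
    false_imp_iff, true_and]
  tauto

lemma card_patternMaps_succ (χ : Fin (h + 1) → Fin (h + 1) → ι) (U : Fin (h + 1) → Finset V) :
    #(patternMaps C χ U) = ∑ v ∈ U 0, #(patternMaps C (fun i j ↦ χ i.succ j.succ)
      fun i ↦ {w ∈ U i.succ | (C (χ 0 i.succ)).Adj v w}) := by
  rw [← card_sigma]
  refine card_nbij' (fun f ↦ ⟨f 0, Fin.tail f⟩) (fun p ↦ Fin.cons p.1 p.2) ?_ ?_
    (fun f _ ↦ Fin.cons_self_tail f) (fun p _ ↦ by simp)
  · intro f hf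
    rw [mem_coe, ← Fin.cons_self_tail f, cons_mem_patternMaps] at hf
    exact mem_sigma.2 hf
  · intro p hp
    exact cons_mem_patternMaps.2 (mem_sigma.1 hp)

variable {S : Finset V} {a ρ : ℝ}

lemma le_card_filter_forall_lt_card_filter_adj
    (hS : ∀ i, ∀ A ⊆ S, ∀ B ⊆ S, a ≤ #A → a ≤ #B → ¬ IsSparsePair (C i) ρ A B)
    (χ : Fin h → ι) (U : Fin h → Finset V) {U₀ : Finset V} (hU₀S : U₀ ⊆ S)
    (hUS : ∀ i, U i ⊆ S) (hU : ∀ i, a ≤ #(U i)) (hU₀ : (h + 1) * a ≤ #U₀) :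
    a ≤ #{v ∈ U₀ | ∀ i, ρ * #(U i) < #{w ∈ U i | (C (χ i)).Adj v w}} := by
  have hfew (i : Fin h) :
      (#{v ∈ U₀ | ¬ ρ * #(U i) < #{w ∈ U i | (C (χ i)).Adj v w}} : ℝ) ≤ a := by
    by_contra hlt
    exact hS (χ i) _ ((filter_subset _ _).trans hU₀S) (U i) (hUS i) (not_le.1 hlt).le (hU i)
      fun v hv ↦ not_lt.1 (mem_filter.1 hv).2
  have hunion := card_le_card_filter_forall_add_sum_card_filter_not U₀
    fun i v ↦ ρ * #(U i) < #{w ∈ U i | (C (χ i)).Adj v w}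
  have hsum := sum_le_card_nsmul univ _ a fun i _ ↦ hfew i
  rw [card_univ, Fintype.card_fin, nsmul_eq_mul] at hsum
  rify at hunion
  linarith

-- Greedy embedding: fewer than `a` vertices of `U 0` are bad for any given later `U j`, and each
-- other choice keeps more than a fraction `ρ` of every later `U j`.
lemma pow_le_card_patternMaps (ha : 0 ≤ a) (hρ : 0 ≤ ρ) (hρ_le : ρ ≤ 1)
    (hS : ∀ i, ∀ A ⊆ S, ∀ B ⊆ S, a ≤ #A → a ≤ #B → ¬ IsSparsePair (C i) ρ A B)
    (χ : Fin h → Fin h → ι) (U : Fin h → Finset V) (hUS : ∀ i, U i ⊆ S)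
    (hU : ∀ i, h * a ≤ ρ ^ h * #(U i)) :
    a ^ h ≤ #(patternMaps C χ U) := by
  induction h with
  | zero => simp [patternMaps]
  | succ h ih =>
    push_cast at hU
    have hU_le (i : Fin (h + 1)) : (h + 1) * a ≤ #(U i) :=
      (hU i).trans (mul_le_of_le_one_left (Nat.cast_nonneg _) (pow_le_one₀ hρ hρ_le))
    have hha : 0 ≤ h * a := by positivity
    set N : V → Fin h → Finset V := fun v i ↦ {w ∈ U i.succ | (C (χ 0 i.succ)).Adj v w}
    set good : Finset V := {v ∈ U 0 | ∀ i, ρ * #(U i.succ) < #(N v i)}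
    have hgood : a ≤ #good :=
      le_card_filter_forall_lt_card_filter_adj hS (fun i ↦ χ 0 i.succ) (fun i ↦ U i.succ)
        (hUS 0) (fun i ↦ hUS _) (fun i ↦ by linarith [hU_le i.succ]) (hU_le 0)
    have hext : ∀ v ∈ good, a ^ h ≤ #(patternMaps C (fun i j ↦ χ i.succ j.succ) (N v)) := by
      refine fun v hv ↦ ih _ _ (fun i ↦ (filter_subset _ _).trans (hUS _)) fun i ↦ ?_
      calc h * a ≤ ρ ^ (h + 1) * #(U i.succ) := by linarith [hU i.succ]
        _ = ρ ^ h * (ρ * #(U i.succ)) := by ring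
        _ ≤ ρ ^ h * #(N v i) := by gcongr; exact ((mem_filter.1 hv).2 i).le
    calc a ^ (h + 1) = a * a ^ h := pow_succ' a h
      _ ≤ #good * a ^ h := by gcongr
      _ ≤ ∑ v ∈ good, (#(patternMaps C (fun i j ↦ χ i.succ j.succ) (N v)) : ℝ) := by
        simpa only [nsmul_eq_mul] using card_nsmul_le_sum good _ _ hext
      _ ≤ ∑ v ∈ U 0, (#(patternMaps C (fun i j ↦ χ i.succ j.succ) (N v)) : ℝ) :=
        sum_le_sum_of_subset_of_nonneg (filter_subset _ _) fun _ _ _ ↦ Nat.cast_nonneg _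
      _ = #(patternMaps C χ U) := by rw [card_patternMaps_succ, Nat.cast_sum]

end PatternCount

section InducedCopies

variable {V W : Type*} (G : SimpleGraph V)

/-- The two-colouring of the pairs of vertices by edges and non-edges of `G`: the graph `G` for
`true` and its complement for `false`. -/
def graphOrCompl : Bool → SimpleGraph V
  | true => G
  | false => Gᶜ

instance [DecidableEq V] [DecidableRel G.Adj] : ∀ b, DecidableRel (graphOrCompl G b).Adj
  | true => inferInstanceAs (DecidableRel G.Adj)
  | false => inferInstanceAs (DecidableRel Gᶜ.Adj)

variable {G}

lemma graphOrCompl_decide_adj {p : Prop} [Decidable p] {x y : V} :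
    (graphOrCompl G (decide p)).Adj x y ↔ x ≠ y ∧ (G.Adj x y ↔ p) := by
  by_cases hp : p
  · simpa [graphOrCompl, hp] using G.ne_of_adj
  · simp [graphOrCompl, hp]

lemma exists_embedding_coe_eq {h : ℕ} {H : SimpleGraph (Fin h)} {f : Fin h → V}
    (hf : ∀ i j, i < j → f i ≠ f j ∧ (G.Adj (f i) (f j) ↔ H.Adj i j)) :
    ∃ φ : H ↪g G, ⇑φ = f := by
  have : Std.Symm fun i j ↦ f i ≠ f j ∧ (G.Adj (f i) (f j) ↔ H.Adj i j) :=
    ⟨fun i j hij ↦ by rwa [ne_comm, G.adj_comm, H.adj_comm]⟩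
  have hpair := pairwise_iff_lt.2 hf
  refine ⟨⟨⟨f, fun i j hij ↦ ?_⟩, fun {i j} ↦ ?_⟩, rfl⟩
  · by_contra hne
    exact (hpair hne).1 hij
  · rcases eq_or_ne i j with rfl | hne
    · simp
    · exact (hpair hne).2

lemma card_patternMaps_le_card_embedding [Finite V] [DecidableEq V] [DecidableRel G.Adj] {h : ℕ}
    (H : SimpleGraph (Fin h)) [DecidableRel H.Adj] (U : Fin h → Finset V) :
    #(patternMaps (graphOrCompl G) (fun i j ↦ decide (H.Adj i j)) U) ≤ Nat.card (H ↪g G) := by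
  have hemb (f : patternMaps (graphOrCompl G) (fun i j ↦ decide (H.Adj i j)) U) :
      ∃ φ : H ↪g G, ⇑φ = f :=
    exists_embedding_coe_eq fun i j hij ↦
      graphOrCompl_decide_adj.1 ((mem_patternMaps.1 f.2).2 i j hij)
  choose φ hφ using hemb
  have : Finite (H ↪g G) := .of_injective _ DFunLike.coe_injective
  rw [← Nat.card_eq_finsetCard]
  refine Nat.card_le_card_of_injective φ fun f g hfg ↦ Subtype.ext ?_
  rw [← hφ f, ← hφ g, hfg]

/-- The fraction `c` such that, in a graph with few induced copies of a graph on `h` vertices,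
every large set `S` contains a `ρ`-sparse pair of sets of size at least `c * #S`. -/
noncomputable def sparsePairFraction (ρ : ℝ) (h : ℕ) : ℝ := ρ ^ h / (h + 1)

lemma sparsePairFraction_pos {ρ : ℝ} (hρ : 0 < ρ) (h : ℕ) : 0 < sparsePairFraction ρ h := by
  unfold sparsePairFraction
  positivity

lemma sparsePairFraction_le_one {ρ : ℝ} (hρ : 0 ≤ ρ) (hρ_le : ρ ≤ 1) (h : ℕ) :
    sparsePairFraction ρ h ≤ 1 :=
  div_le_one_of_le₀ (by linarith [pow_le_one₀ (n := h) hρ hρ_le, Nat.cast_nonneg (α := ℝ) h])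
    (by positivity)

lemma exists_isSparsePair_of_card_embedding_lt [Finite V] [DecidableEq V] [DecidableRel G.Adj]
    [Fintype W] {H : SimpleGraph W} {ρ q : ℝ} (hρ : 0 ≤ ρ) (hρ_le : ρ ≤ 1) (hq : 0 ≤ q)
    (hcopies : (Nat.card (H ↪g G) : ℝ) < q ^ Fintype.card W) {S : Finset V}
    (hS : q ≤ sparsePairFraction ρ (Fintype.card W) * #S) :
    ∃ b, ∃ A ⊆ S, ∃ B ⊆ S, sparsePairFraction ρ (Fintype.card W) * #S ≤ #A ∧
      sparsePairFraction ρ (Fintype.card W) * #S ≤ #B ∧ IsSparsePair (graphOrCompl G b) ρ A B := by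
  classical
  by_contra! hno
  set h := Fintype.card W
  set a := sparsePairFraction ρ h * #S with ha
  have hlarge : h * a ≤ ρ ^ h * #S := by
    have hsum : h * a + a = ρ ^ h * #S := by
      rw [ha, sparsePairFraction]
      field_simp
    linarith
  have hcount := pow_le_card_patternMaps (hq.trans hS) hρ hρ_le hno
    (fun i j ↦ decide ((H.overFin rfl).Adj i j)) (fun _ : Fin h ↦ S) (fun _ ↦ subset_rfl)
    fun _ ↦ hlarge
  refine hcopies.not_ge ?_
  calc q ^ h ≤ a ^ h := by gcongr
    _ ≤ Nat.card (H.overFin rfl ↪g G) :=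
      hcount.trans (Nat.cast_le.2 (card_patternMaps_le_card_embedding _ _))
    _ = Nat.card (H ↪g G) := by
      rw [Nat.card_congr (RelIso.relEmbeddingCongr (H.overFinIso rfl) (RelIso.refl G.Adj))]

end InducedCopies

section SparseUnion

variable {V : Type*} {G : SimpleGraph V} [DecidableRel G.Adj] {m s t : ℕ} {κ : ℝ}
  {X Y : Finset V}

/-- `Y` has the size and at most the number of (ordered) edges of a union of `s` blocks, each with
`m` vertices and arbitrary inside, whose mutual edge densities are at most `κ`. -/
structure IsSparseUnion (G : SimpleGraph V) [DecidableRel G.Adj] (m : ℕ) (κ : ℝ) (s : ℕ)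
    (Y : Finset V) : Prop where
  card_eq : #Y = s * m
  card_interedges_le : (#(G.interedges Y Y) : ℝ) ≤ s * (m * (m - 1)) + κ * (s * m) ^ 2

lemma isSparseUnion_one (hκ : 0 ≤ κ) (hY : #Y = m) :
    IsSparseUnion G m κ 1 Y := by
  refine ⟨by rw [hY, one_mul], (card_interedges_self_le G Y).trans ?_⟩
  rw [hY, Nat.cast_one, one_mul]
  exact le_add_of_nonneg_right (by positivity)

namespace IsSparseUnion

lemma union [DecidableEq V] (hX : IsSparseUnion G m κ s X) (hY : IsSparseUnion G m κ t Y)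
    (hXY : Disjoint X Y) (hsparse : IsSparsePair G κ Y X) :
    IsSparseUnion G m κ (s + t) (X ∪ Y) := by
  refine ⟨by rw [card_union_of_disjoint hXY, hX.card_eq, hY.card_eq, add_mul], ?_⟩
  have hcross := hsparse.card_interedges_le
  rw [hX.card_eq, hY.card_eq] at hcross
  rw [card_interedges_union_self G hXY]
  push_cast at hcross ⊢
  linarith [hX.card_interedges_le, hY.card_interedges_le]

lemma exists_subset_card_filter_adj_le (hY : IsSparseUnion G m κ s Y) {D : ℝ} (hD : 0 < D)
    (hmD : m - 1 + κ * (s * m) ≤ D) :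
    ∃ X ⊆ Y, (s * m : ℝ) ≤ 2 * #X ∧ ∀ v ∈ X, (#{w ∈ X | G.Adj v w} : ℝ) ≤ 2 * D := by
  have hYcard : (#Y : ℝ) = s * m := by exact_mod_cast hY.card_eq
  set X : Finset V := {v ∈ Y | (#{w ∈ Y | G.Adj v w} : ℝ) ≤ 2 * D}
  have hXY : X ⊆ Y := filter_subset _ _
  refine ⟨X, hXY, ?_, fun v hv ↦ ?_⟩
  · rw [← hYcard]
    refine card_le_two_mul_card_filter_le_two_mul (fun _ _ ↦ Nat.cast_nonneg _) hD ?_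
    calc ∑ v ∈ Y, (#{w ∈ Y | G.Adj v w} : ℝ) = #(G.interedges Y Y) := by
          rw [card_interedges_eq_sum_card_filter_adj, Nat.cast_sum]
      _ ≤ s * (m * (m - 1)) + κ * (s * m) ^ 2 := hY.card_interedges_le
      _ = (m - 1 + κ * (s * m)) * (s * m) := by ring
      _ ≤ D * #Y := by rw [hYcard]; gcongr
  · exact le_trans (by gcongr) (mem_filter.1 hv).2

end IsSparseUnion

end SparseUnion

section Ramsey

variable {V ι : Type*} {C : ι → SimpleGraph V} [∀ i, DecidableRel (C i).Adj] {c ρ : ℝ} {m : ℕ}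

lemma sum_update_pred_add_one [Fintype ι] [DecidableEq ι] {l : ι → ℕ} {i : ι} (hi : l i ≠ 0) :
    ∑ j, Function.update l i (l i - 1) j + 1 = ∑ j, l j := by
  rw [sum_update_of_mem (mem_univ i), ← add_sum_erase univ l (mem_univ i),
    sdiff_singleton_eq_erase]
  lia

lemma four_mul_le_mul_of_pow_succ_mul_le {d : ℕ} {x y : ℝ} (hc : 0 < c)
    (h : (4 / c) ^ (d + 1) * x ≤ y) : 4 * ((4 / c) ^ d * x) ≤ c * y :=
  calc 4 * ((4 / c) ^ d * x) = c * ((4 / c) ^ (d + 1) * x) := by rw [pow_succ]; field_simp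
    _ ≤ c * y := by gcongr

/-- For some `i`, the set `S` contains a sparse union of `2 ^ l i` blocks for the graph `C i`: the
conclusion of a Ramsey theorem with targets `l`. -/
def HasSparseUnion (C : ι → SimpleGraph V) [∀ i, DecidableRel (C i).Adj] (m : ℕ) (κ : ℝ)
    (l : ι → ℕ) (S : Finset V) : Prop :=
  ∃ i, ∃ Y ⊆ S, IsSparseUnion (C i) m κ (2 ^ l i) Y

lemma IsSparsePair.hasSparseUnion [DecidableEq ι] {l : ι → ℕ} {S A B : Finset V} {M : ℝ} {i : ι}
    (hAB : IsSparsePair (C i) ρ A B) (hρ : 0 < ρ) (hm : 0 < m) (hi : l i ≠ 0)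
    (hAS : A ⊆ S) (hBS : B ⊆ S) (hA : M ≤ #A) (hB : 4 * M ≤ #B) (hM : 2 ^ (l i - 1) * m ≤ M)
    (hunion : ∀ T ⊆ S, M ≤ #T →
      HasSparseUnion C m (2 * ρ) (Function.update l i (l i - 1)) T) :
    HasSparseUnion C m (2 * ρ) l S := by
  classical
  obtain ⟨j, Y, hYA, hY⟩ := hunion A hAS hA
  rcases ne_or_eq j i with hj | rfl
  · exact ⟨j, Y, hYA.trans hAS, by rwa [Function.update_of_ne hj] at hY⟩
  rw [Function.update_self] at hY
  have hYcard : (#Y : ℝ) ≤ M := by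
    rw [hY.card_eq]
    exact_mod_cast hM
  have hYne : Y.Nonempty := card_pos.1 (by rw [hY.card_eq]; positivity)
  obtain ⟨B', hB'B, hYB', hB'card, hB'⟩ := (hAB.mono_left hYA).exists_disjoint_swap hρ hYne
  obtain ⟨k, Z, hZB', hZ⟩ := hunion B' (hB'B.trans hBS) (by linarith)
  have hZS : Z ⊆ S := hZB'.trans (hB'B.trans hBS)
  rcases ne_or_eq k j with hk | rfl
  · exact ⟨k, Z, hZS, by rwa [Function.update_of_ne hk] at hZ⟩
  rw [Function.update_self] at hZ
  have hYZ := hY.union hZ (disjoint_of_subset_right hZB' hYB') (hB'.mono_left hZB')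
  rw [← two_mul, ← pow_succ', Nat.sub_one_add_one hi] at hYZ
  exact ⟨k, Y ∪ Z, union_subset (hYA.trans hAS) hZS, hYZ⟩

lemma hasSparseUnion_of_isSparsePair [Fintype ι] (hc : 0 < c) (hc_le : c ≤ 1) (hρ : 0 < ρ)
    (hm : 0 < m)
    (hpair : ∀ S : Finset V, m ≤ c * #S → ∃ i, ∃ A ⊆ S, ∃ B ⊆ S, c * #S ≤ #A ∧ c * #S ≤ #B ∧
      IsSparsePair (C i) ρ A B)
    (l : ι → ℕ) (S : Finset V) (hS : (4 / c) ^ (∑ i, l i + 1) * m ≤ #S) :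
    HasSparseUnion C m (2 * ρ) l S := by
  classical
  have hfour : 4 ≤ 4 / c := by rw [le_div_iff₀ hc]; linarith
  have hm_le (d : ℕ) : (m : ℝ) ≤ (4 / c) ^ d * m :=
    le_mul_of_one_le_left (by positivity) (one_le_pow₀ (by linarith))
  induction hd : ∑ i, l i using Nat.strong_induction_on generalizing l S with | _ d ih
  have hcS := four_mul_le_mul_of_pow_succ_mul_le hc hS
  obtain ⟨i, A, hAS, B, hBS, hA, hB, hAB⟩ := hpair S (by linarith [hm_le (∑ i, l i)])
  rcases eq_or_ne (l i) 0 with hi | hi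
  · obtain ⟨Y, hYS, hYm⟩ := exists_subset_card_eq (s := S) (n := m)
      (by exact_mod_cast (hm_le _).trans hS)
    exact ⟨i, Y, hYS, by rw [hi]; exact isSparseUnion_one (by positivity) hYm⟩
  have hsum := sum_update_pred_add_one hi
  have hexp : l i - 1 ≤ ∑ j, l j :=
    (Nat.sub_le _ _).trans (single_le_sum_of_canonicallyOrdered (mem_univ i))
  have hM : (2 : ℝ) ^ (l i - 1) * m ≤ (4 / c) ^ (∑ j, l j) * m := by
    gcongr ?_ * _
    calc (2 : ℝ) ^ (l i - 1) ≤ (4 / c) ^ (l i - 1) := by gcongr; linarith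
      _ ≤ (4 / c) ^ ∑ j, l j := pow_le_pow_right₀ (by linarith) hexp
  refine hAB.hasSparseUnion hρ hm hi hAS hBS (by linarith [hm_le (∑ j, l j)])
    (hcS.trans hB) hM fun T _ hT ↦ ih _ (by lia) _ T ?_ rfl
  rwa [hsum]

lemma exists_subset_card_filter_adj_le_of_isSparsePair [Fintype ι] {l : ℕ} {q : ℝ}
    (hc : 0 < c) (hc_le : c ≤ 1) (hl : l ≠ 0) (hq : 1 < 2 ^ l * q / 2)
    (hpair : ∀ S : Finset V, q ≤ c * #S → ∃ i, ∃ A ⊆ S, ∃ B ⊆ S, c * #S ≤ #A ∧ c * #S ≤ #B ∧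
      IsSparsePair (C i) (1 / (2 * (2 ^ l) ^ 2)) A B)
    {S : Finset V} (hS : (4 / c) ^ (Fintype.card ι * l + 1) * (2 ^ l * q) ≤ #S) :
    ∃ i, ∃ X ⊆ S, 2 ^ l * q / 2 ≤ #X ∧ ∀ v ∈ X, (#{w ∈ X | (C i).Adj v w} : ℝ) ≤ 4 * q := by
  have htwo : (2 : ℝ) ≤ 2 ^ l := le_self_pow₀ one_le_two hl
  have hq_pos : 0 < q := by
    by_contra! hneg
    nlinarith
  have hqm : q ≤ ⌈q⌉₊ := Nat.le_ceil q
  have hmq : ⌈q⌉₊ < q + 1 := Nat.ceil_lt_add_one hq_pos.le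
  have hm_le : ⌈q⌉₊ ≤ 2 ^ l * q := by nlinarith
  obtain ⟨i, Y, hYS, hY⟩ := hasSparseUnion_of_isSparsePair hc hc_le
    (ρ := 1 / (2 * (2 ^ l) ^ 2)) (by positivity) (Nat.ceil_pos.2 hq_pos)
    (fun S hS ↦ hpair S (hqm.trans hS)) (fun _ ↦ l) S (by
      rw [sum_const, card_univ, smul_eq_mul]
      exact le_trans (by gcongr) hS)
  have hdensity : 2 * (1 / (2 * (2 ^ l) ^ 2)) * (((2 ^ l : ℕ) : ℝ) * ⌈q⌉₊) ≤ q := by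
    calc 2 * (1 / (2 * (2 ^ l) ^ 2)) * (((2 ^ l : ℕ) : ℝ) * ⌈q⌉₊) = ⌈q⌉₊ / 2 ^ l := by
          push_cast
          field_simp
      _ ≤ q := by rwa [div_le_iff₀' (by positivity)]
  obtain ⟨X, hXY, hXcard, hX⟩ := hY.exists_subset_card_filter_adj_le (D := 2 * q)
    (by positivity) (by linarith)
  refine ⟨i, X, hXY.trans hYS, ?_, fun v hv ↦ (hX v hv).trans_eq (by ring)⟩
  push_cast at hXcard
  have : 2 ^ l * q ≤ 2 ^ l * ⌈q⌉₊ := by gcongr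
  linarith

end Ramsey

section FewCopies

lemma exists_ne_zero_le_mul_two_pow {ε : ℝ} (hε : 0 < ε) (x : ℝ) :
    ∃ l : ℕ, l ≠ 0 ∧ x ≤ ε * 2 ^ l := by
  obtain ⟨l, hl⟩ := pow_unbounded_of_one_lt (|x| / ε) one_lt_two
  refine ⟨l + 1, l.succ_ne_zero, ?_⟩
  rw [div_lt_iff₀ hε] at hl
  rw [pow_succ]
  linarith [le_abs_self x, abs_nonneg x]

variable {V W : Type*}

lemma card_subtype_adj_iff_eq_card_embedding (G : SimpleGraph V) (H : SimpleGraph W) :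
    Nat.card {φ : W ↪ V // ∀ u w : W, G.Adj (φ u) (φ w) ↔ H.Adj u w} = Nat.card (H ↪g G) :=
  Nat.card_congr
    { toFun φ := ⟨φ.1, φ.2 _ _⟩
      invFun φ := ⟨φ.toEmbedding, fun _ _ ↦ φ.map_rel_iff⟩ }

lemma exists_finset_card_filter_adj_le_of_card_embedding_lt [Fintype V] [DecidableEq V]
    [Fintype W] {G : SimpleGraph V} [DecidableRel G.Adj] {H : SimpleGraph W} {l : ℕ} {q : ℝ}
    (hl : l ≠ 0) (hq : 0 < q) (hcopies : (Nat.card (H ↪g G) : ℝ) < q ^ Fintype.card W)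
    (hV : (4 / sparsePairFraction (1 / (2 * (2 ^ l) ^ 2)) (Fintype.card W)) ^ (2 * l + 1) *
      2 ^ l * q ≤ Fintype.card V) :
    ∃ b, ∃ X : Finset V, 2 ^ l * q / 2 ≤ #X ∧
      ∀ v ∈ X, (#{w ∈ X | (graphOrCompl G b).Adj v w} : ℝ) ≤ 4 * q := by
  set ρ : ℝ := 1 / (2 * (2 ^ l) ^ 2)
  have hρ : 0 < ρ := by positivity
  have hρ_le : ρ ≤ 1 := by
    have : (1 : ℝ) ≤ (2 ^ l) ^ 2 := one_le_pow₀ (one_le_pow₀ one_le_two)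
    exact div_le_one_of_le₀ (by linarith) (by positivity)
  have hc := sparsePairFraction_pos hρ (Fintype.card W)
  rcases le_or_gt (2 ^ l * q / 2) 1 with hsmall | hlarge
  · have hVpos : (0 : ℝ) < Fintype.card V := lt_of_lt_of_le (by positivity) hV
    obtain ⟨v₀⟩ := Fintype.card_pos_iff.1 (Nat.cast_pos.1 hVpos)
    refine ⟨true, {v₀}, by simpa using hsmall, fun v hv ↦ ?_⟩
    rw [mem_singleton.1 hv, filter_singleton, if_neg (SimpleGraph.irrefl _), card_empty,
      Nat.cast_zero]
    positivity
  · obtain ⟨b, X, -, hX⟩ := exists_subset_card_filter_adj_le_of_isSparsePair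
      (C := graphOrCompl G) (S := univ) hc (sparsePairFraction_le_one hρ.le hρ_le _) hl hlarge
      (fun S ↦ exists_isSparsePair_of_card_embedding_lt hρ.le hρ_le hq.le hcopies)
      (by rwa [Fintype.card_bool, card_univ, ← mul_assoc])
    exact ⟨b, X, hX⟩

end FewCopies

/-- Nikiforov's theorem (degree form): for every `ε > 0` and graph `H` on `h` vertices
there are `γ, δ > 0` such that every graph `G` with fewer than `γ|G|^h` induced labelled
copies of `H` has a subset `X` with `|X| ≥ δ|G|` such that one of `G[X]`, `Ḡ[X]` has
maximum degree at most `εδ|G|`. -/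
theorem stmt_14 (ε : ℝ) (hε : 0 < ε) {W : Type*} [Fintype W] (H : SimpleGraph W) :
    ∃ γ δ : ℝ, 0 < γ ∧ 0 < δ ∧
      ∀ (V : Type) [Fintype V] [DecidableEq V] (G : SimpleGraph V) [DecidableRel G.Adj],
        ((Nat.card {φ : W ↪ V // ∀ u w : W, G.Adj (φ u) (φ w) ↔ H.Adj u w} : ℝ) <
          γ * (Fintype.card V : ℝ) ^ (Fintype.card W)) →
        ∃ X : Finset V, δ * (Fintype.card V : ℝ) ≤ (X.card : ℝ) ∧
          ((∀ v ∈ X, ((X.filter (G.Adj v)).card : ℝ) ≤ ε * δ * (Fintype.card V : ℝ)) ∨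
           (∀ v ∈ X, ((X.filter (Gᶜ.Adj v)).card : ℝ) ≤ ε * δ * (Fintype.card V : ℝ))) := by
  obtain ⟨l, hl, hlε⟩ := exists_ne_zero_le_mul_two_pow hε 8
  set c := sparsePairFraction (1 / (2 * (2 ^ l) ^ 2)) (Fintype.card W)
  have hc : 0 < c := sparsePairFraction_pos (by positivity) _
  set K : ℝ := (4 / c) ^ (2 * l + 1) * 2 ^ l
  have hK : 0 < K := by positivity
  refine ⟨K⁻¹ ^ Fintype.card W, 2 ^ l * K⁻¹ / 2, by positivity, by positivity, ?_⟩
  intro V _ _ G _ hcopies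
  rcases isEmpty_or_nonempty V with hV | hV
  · exact ⟨∅, by simp, by simp⟩
  have hn : (0 : ℝ) < Fintype.card V := Nat.cast_pos.2 Fintype.card_pos
  rw [card_subtype_adj_iff_eq_card_embedding, ← mul_pow] at hcopies
  obtain ⟨b, X, hXcard, hX⟩ := exists_finset_card_filter_adj_le_of_card_embedding_lt hl
    (mul_pos (inv_pos.2 hK) hn) hcopies (mul_inv_cancel_left₀ hK.ne' _).le
  have hdeg : 4 * (K⁻¹ * Fintype.card V) ≤ ε * (2 ^ l * K⁻¹ / 2) * Fintype.card V := by
    calc 4 * (K⁻¹ * Fintype.card V) = 8 * (K⁻¹ * Fintype.card V / 2) := by ring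
      _ ≤ ε * 2 ^ l * (K⁻¹ * Fintype.card V / 2) := by gcongr
      _ = ε * (2 ^ l * K⁻¹ / 2) * Fintype.card V := by ring
  refine ⟨X, hXcard.trans_eq' (by ring), ?_⟩
  cases b with
  | true => exact Or.inl fun v hv ↦ (hX v hv).trans hdeg
  | false => exact Or.inr fun v hv ↦ (hX v hv).trans hdeg
end
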